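/- arXiv:2603.28485 — 4 statements merged into one kernel-verified Lean document; each statement's English description precedes it below -/
import Mathlib

section
/- Let m > 4 and let e be a positive integer with gcd(e, 2^m − 1) = 1. Let Q ∈ F_{2^m}[X] be a polynomial of odd degree t whose evaluation map is a permutation of F_{2^m}, and assume 3·e·t ≤ 2^{m/4} − 1 (an inequality of real numbers). Let a, b, c, d ∈ F_{2^m} with ad + bc ≠ 0, and define f̃ : F_{2^m} × F_{2^m} → F_2 by f̃(x,y) = Tr_1^m(Q((bx + dy) · ((ax + cy)⁻¹)^e)). Then the second-order derivative D_{(1,0)} D_{(0,1)} f̃, i.e., the function (x,y) ↦ f̃(x+1,y+1) + f̃(x+1,y) + f̃(x,y+1) + f̃(x,y), is not constant on F_{2^m} × F_{2^m}. -/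
/-- The second-order derivative `D_u D_v f (x) = f x + f (x+u) + f (x+v) + f (x+u+v)`. -/
def D2 {V : Type*} [AddCommGroup V] (f : V → ZMod 2) (u v x : V) : ZMod 2 :=
  f x + f (x + u) + f (x + v) + f (x + u + v)

/-- The absolute trace map of `F_{2^m}`. -/
noncomputable def Tr (m : ℕ) (x : GaloisField 2 m) : ZMod 2 :=
  Algebra.trace (ZMod 2) (GaloisField 2 m) x

/-!
On the line `bx + dy = 0`, parametrised by `u = ax + cy`, the second derivative becomes,
up to a constant, the trace of
`Q (b (u + a)⁻ᵉ) + Q (d (u + c)⁻ᵉ) + Q ((b + d) (u + a + c)⁻ᵉ)`.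
As `ad + bc ≠ 0`, one of the poles `a`, `c`, `a + c` differs from the other two and has a nonzero
numerator. Move it to `0` and remove the `p`-part of `e` by a power of Frobenius (`p = 2`), so that
it has order `N` prime to `p`. If the trace were constant, its sum over `u` against any polynomial
of small degree would vanish. For the test polynomial `Xᴺ (∏ⱼ (X - cⱼ)) ^ (p + pᵏ)`, where the `cⱼ`
are the remaining poles, only the leading coefficient at the pole `0` contributes to this sum: the
exponents of its expansion at `cⱼ` have the form `w + pᵏ y` with `w, y ≥ 1` and `w` small, and these
are not Frobenius conjugate to any exponent `≤ N`.
-/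

open Polynomial Finset

section Arithmetic

theorem eq_or_eq_of_mul_pow_modEq {b m i n r : ℕ} (hb : 0 < b) (hi : i ≤ m) (hn : 0 < n)
    (hr : 0 < r) (hnr : n * r < b ^ m - 1) (h : r ≡ n * b ^ i [MOD b ^ m - 1]) :
    r = n * b ^ i ∨ n = r * b ^ (m - i) := by
  have hq : b ^ m = b ^ i * b ^ (m - i) := by rw [← pow_add, Nat.add_sub_cancel' hi]
  have hq_modEq : b ^ m ≡ 1 [MOD b ^ m - 1] :=
    ((Nat.modEq_iff_dvd' (Nat.one_le_pow _ _ hb)).2 dvd_rfl).symm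
  have hr_lt : r < b ^ m - 1 := (Nat.le_mul_of_pos_left r hn).trans_lt hnr
  have hn_lt : n < b ^ m - 1 := (Nat.le_mul_of_pos_right n hr).trans_lt hnr
  have h_reversed : n ≡ r * b ^ (m - i) [MOD b ^ m - 1] := calc
    n ≡ n * b ^ m [MOD b ^ m - 1] := by simpa using (hq_modEq.mul_left n).symm
    _ = n * b ^ i * b ^ (m - i) := by rw [hq, mul_assoc]
    _ ≡ r * b ^ (m - i) [MOD b ^ m - 1] := h.symm.mul_right _
  rcases lt_or_ge (n * b ^ i) (b ^ m - 1) with h_small | h_large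
  · exact .inl (h.eq_of_lt_of_lt hr_lt h_small)
  refine .inr (h_reversed.eq_of_lt_of_lt hn_lt ?_)
  by_contra! h_large'
  have h_prod : (b ^ m - 1) * (b ^ m - 1) ≤ n * r * b ^ m := calc
    (b ^ m - 1) * (b ^ m - 1) ≤ (n * b ^ i) * (r * b ^ (m - i)) := Nat.mul_le_mul h_large h_large'
    _ = n * r * b ^ m := by rw [hq]; ring
  obtain ⟨k, hk⟩ : ∃ k, b ^ m = k + 2 := ⟨b ^ m - 2, by omega⟩
  rw [hk, show k + 2 - 1 = k + 1 from rfl] at h_prod hnr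
  nlinarith [Nat.le_of_lt_succ hnr]

theorem add_mul_pow_ne_mul_pow {p k N w y s i : ℕ} (hw : 0 < w) (hNw : N * w < p ^ k) (hy : 0 < y)
    (hs : s ≤ N) : w + p ^ k * y ≠ s * p ^ i := by
  intro h
  rcases le_total k i with hki | hik
  · have h_dvd : p ^ k ∣ w := by
      rw [← Nat.dvd_add_left (dvd_mul_right (p ^ k) y), h]
      exact (pow_dvd_pow p hki).mul_left s
    have hs0 : 0 < s := Nat.pos_of_ne_zero (by rintro rfl; omega)
    have := Nat.le_of_dvd hw h_dvd
    nlinarith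
  · have h_dvd : p ^ i ∣ w := by
      rw [← Nat.dvd_add_left ((pow_dvd_pow p hik).mul_right y), h]
      exact dvd_mul_left _ _
    have := Nat.mul_le_mul hs (Nat.le_of_dvd hw h_dvd)
    have := Nat.le_mul_of_pos_right (p ^ k) hy
    omega

theorem exists_lt_pow_and_mul_add_mul_lt {p N M n q : ℕ} (hp : 1 < p) (hNM : N ≤ M)
    (hq : M * (M + n * (p + p * (M * (M + n * p)))) < q) :
    ∃ k, N * (N + n * p) < p ^ k ∧ N * (N + n * (p + p ^ k)) < q := by
  rcases Nat.eq_zero_or_pos N with rfl | hN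
  · exact ⟨0, by simp, by omega⟩
  set T := N * (N + n * p) with hT
  have hT0 : T ≠ 0 := by positivity
  refine ⟨Nat.log p T + 1, Nat.lt_pow_succ_log_self hp T, lt_of_le_of_lt ?_ hq⟩
  have h_pow : p ^ (Nat.log p T + 1) ≤ p * (M * (M + n * p)) := calc
    p ^ (Nat.log p T + 1) = p * p ^ Nat.log p T := pow_succ' p _
    _ ≤ p * T := Nat.mul_le_mul_left p (Nat.pow_log_le_self p hT0)
    _ ≤ p * (M * (M + n * p)) := by rw [hT]; gcongr
  gcongr

end Arithmetic

section Pairing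

variable {F : Type*} [Field F] [Fintype F]

theorem sum_pow_mul_inv_pow (s : ℕ) {n : ℕ} (hn : n ≠ 0) :
    ∑ u : F, u ^ s * u⁻¹ ^ n = if s ≡ n [MOD Fintype.card F - 1] then -1 else 0 := by
  classical
  have hq : 1 < Fintype.card F := Fintype.one_lt_card
  obtain ⟨k, hk⟩ : ∃ k, Fintype.card F = k + 2 := ⟨_, (Nat.sub_add_cancel hq).symm⟩
  have h_unit (u : Fˣ) : (u : F) ^ s * (u : F)⁻¹ ^ n = (u : F) ^ (s + n * k) := by
    have h_inv : (u : F)⁻¹ = (u : F) ^ k := by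
      refine inv_eq_of_mul_eq_one_right ?_
      rw [← pow_succ', ← FiniteField.pow_card_sub_one_eq_one (u : F) u.ne_zero, hk]
      rfl
    rw [h_inv, pow_add, mul_comm n k, pow_mul]
  have h_dvd : Fintype.card F - 1 ∣ s + n * k ↔ s ≡ n [MOD Fintype.card F - 1] := by
    rw [hk, ← Nat.modEq_zero_iff_dvd]
    have h_zero : n + n * k ≡ 0 [MOD k + 1] :=
      Nat.modEq_zero_iff_dvd.2 ⟨n, by ring⟩
    exact ⟨fun h => Nat.ModEq.add_right_cancel' (n * k) (h.trans h_zero.symm),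
      fun h => (h.add_right _).trans h_zero⟩
  rw [← Fintype.sum_subtype_add_sum_subtype (fun u : F => u ≠ 0)]
  have h0 : ∑ u : {u : F // ¬ u ≠ 0}, (u : F) ^ s * (u : F)⁻¹ ^ n = 0 :=
    Fintype.sum_eq_zero _ fun u => by simp [not_not.1 u.2, hn]
  rw [h0, add_zero, ← unitsEquivNeZero.sum_comp]
  simp only [unitsEquivNeZero_apply_coe, h_unit, FiniteField.sum_pow_units, h_dvd]

theorem sum_eval_eq_zero_of_natDegree_lt {P : F[X]} (hP : P.natDegree < Fintype.card F - 1) :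
    ∑ u : F, P.eval u = 0 := by
  simp_rw [eval_eq_sum_range]
  rw [sum_comm]
  refine sum_eq_zero fun s hs => ?_
  rw [← mul_sum, FiniteField.sum_pow_lt_card_sub_one F s (by rw [mem_range] at hs; omega),
    mul_zero]

theorem sum_eval_mul_inv_pow (P : F[X]) {n : ℕ} (hn : n ≠ 0) :
    ∑ u : F, P.eval u * u⁻¹ ^ n =
      -∑ r ∈ P.support with r ≡ n [MOD Fintype.card F - 1], P.coeff r := by
  simp_rw [eval_eq_sum, Polynomial.sum, sum_mul, mul_assoc]
  rw [sum_comm, sum_filter, ← sum_neg_distrib]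
  refine sum_congr rfl fun r _ => ?_
  rw [← mul_sum, sum_pow_mul_inv_pow r hn]
  split_ifs <;> simp

end Pairing

section FrobeniusReduced

/-- No exponent of `P` is a Frobenius conjugate of another integer in `[0, N]`: multiplying or
dividing an exponent by a power of `p` never produces a different integer `s ≤ N`. Such test
polynomials see each monomial of degree at most `N` under the trace form separately. -/
def IsFrobeniusReduced {R : Type*} [Semiring R] (p N : ℕ) (P : R[X]) : Prop :=
  ∀ r ∈ P.support, ∀ s ≤ N, ∀ i, (r = s * p ^ i ∨ s = r * p ^ i) → r = s

variable {K F : Type*} [Field K] [Field F] [Fintype F] [Algebra K F] {p : ℕ} {N : ℕ} {P : F[X]}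

theorem IsFrobeniusReduced.modEq_iff [CharP F p] (hP : IsFrobeniusReduced p N P)
    (hP0 : P.coeff 0 = 0) (hdeg : N * P.natDegree < Fintype.card F - 1) {s : ℕ} (hs0 : s ≠ 0)
    (hsN : s ≤ N) {i r : ℕ} (hi : i < Module.finrank K F) (hr : r ∈ P.support) :
    r ≡ s * Nat.card K ^ i [MOD Fintype.card F - 1] ↔ r = s ∧ i = 0 := by
  have : Finite K := Finite.of_injective _ (algebraMap K F).injective
  have : Fintype K := Fintype.ofFinite K
  have : CharP K p := (algebraMap K F).charP (algebraMap K F).injective p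
  obtain ⟨n, -, hn⟩ := FiniteField.card K p
  rw [← Nat.card_eq_fintype_card] at hn hdeg ⊢
  have hK : 1 < Nat.card K := Finite.one_lt_card
  refine ⟨fun h => ?_, by rintro ⟨rfl, rfl⟩; rw [pow_zero, mul_one]⟩
  have hr0 : 0 < r := Nat.pos_of_ne_zero fun h0 => mem_support_iff.1 hr (h0 ▸ hP0)
  have hsr : s * r < Nat.card F - 1 :=
    (Nat.mul_le_mul hsN (le_natDegree_of_mem_supp r hr)).trans_lt hdeg
  rw [Module.natCard_eq_pow_finrank (K := K) (V := F)] at h hsr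
  rcases eq_or_eq_of_mul_pow_modEq hK.le hi.le (Nat.pos_of_ne_zero hs0) hr0 hsr h
    with h_eq | h_eq <;> have h_conj := h_eq <;> rw [hn, ← pow_mul] at h_conj
  · obtain rfl := hP r hr s hsN _ (.inl h_conj)
    refine ⟨rfl, ?_⟩
    by_contra hi0
    exact (lt_mul_of_one_lt_right hr0 (Nat.one_lt_pow hi0 hK)).ne h_eq
  · obtain rfl := hP r hr s hsN _ (.inr h_conj)
    exact absurd h_eq (lt_mul_of_one_lt_right hr0 (Nat.one_lt_pow (by omega) hK)).ne

theorem IsFrobeniusReduced.sum_eval_mul_trace_mul_inv_pow [CharP F p]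
    (hP : IsFrobeniusReduced p N P) (hP0 : P.coeff 0 = 0)
    (hdeg : N * P.natDegree < Fintype.card F - 1) {s : ℕ} (hs0 : s ≠ 0) (hsN : s ≤ N) (α : F) :
    ∑ u : F, P.eval u * algebraMap K F (Algebra.trace K F (α * u⁻¹ ^ s)) =
      -(α * P.coeff s) := by
  have hK : Nat.card K ≠ 0 :=
    have : Finite K := Finite.of_injective _ (algebraMap K F).injective
    Nat.card_pos.ne'
  have h_conj (i : ℕ) (hi : i ∈ range (Module.finrank K F)) :
      ∑ u : F, P.eval u * u⁻¹ ^ (s * Nat.card K ^ i) = if i = 0 then -P.coeff s else 0 := by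
    rw [sum_eval_mul_inv_pow P (mul_ne_zero hs0 (pow_ne_zero i hK)),
      filter_congr fun r hr => hP.modEq_iff hP0 hdeg hs0 hsN (mem_range.1 hi) hr]
    split_ifs with hi0
    · simp only [hi0, and_true, filter_eq']
      split_ifs with hs
      · rw [sum_singleton]
      · rw [sum_empty, notMem_support_iff.1 hs]
    · simp [hi0]
  calc ∑ u : F, P.eval u * algebraMap K F (Algebra.trace K F (α * u⁻¹ ^ s))
      = ∑ i ∈ range (Module.finrank K F), α ^ Nat.card K ^ i *
          ∑ u : F, P.eval u * u⁻¹ ^ (s * Nat.card K ^ i) := by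
        simp_rw [FiniteField.algebraMap_trace_eq_sum_pow, mul_sum]
        rw [sum_comm]
        refine sum_congr rfl fun i _ => sum_congr rfl fun u _ => ?_
        rw [mul_pow, pow_mul]
        ring
    _ = ∑ i ∈ range (Module.finrank K F),
          α ^ Nat.card K ^ i * if i = 0 then -P.coeff s else 0 :=
        sum_congr rfl fun i hi => by rw [h_conj i hi]
    _ = -(α * P.coeff s) := by
        have : 0 ∈ range (Module.finrank K F) := mem_range.2 Module.finrank_pos
        rw [sum_eq_single_of_mem 0 this fun i _ hi => by rw [if_neg hi, mul_zero]]
        simp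

theorem IsFrobeniusReduced.sum_eval_mul_trace_eval_inv [CharP F p]
    (hP : IsFrobeniusReduced p N P) (hP0 : P.coeff 0 = 0)
    (hdeg : N * P.natDegree < Fintype.card F - 1) (hN : N ≠ 0) {A : F[X]} (hA : A.natDegree ≤ N) :
    ∑ u : F, P.eval u * algebraMap K F (Algebra.trace K F (A.eval u⁻¹)) =
      -∑ s ∈ range (N + 1), A.coeff s * P.coeff s := by
  simp_rw [eval_eq_sum_range' (Nat.lt_succ_of_le hA), map_sum, mul_sum]
  rw [sum_comm, ← sum_neg_distrib]
  refine sum_congr rfl fun s hs => ?_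
  rcases eq_or_ne s 0 with rfl | hs0
  · have hP_lt : P.natDegree < Fintype.card F - 1 :=
      (Nat.le_mul_of_pos_left _ (Nat.pos_of_ne_zero hN)).trans_lt hdeg
    simp only [pow_zero, mul_one, ← sum_mul, sum_eval_eq_zero_of_natDegree_lt hP_lt, hP0,
      zero_mul, mul_zero, neg_zero]
  · exact hP.sum_eval_mul_trace_mul_inv_pow hP0 hdeg hs0 (mem_range_succ_iff.1 hs) _

end FrobeniusReduced

section PoleTest

variable {R ι : Type*} [CommRing R] {p : ℕ} [ExpChar R p]

theorem pow_dvd_of_coeff_pow_expChar_pow_ne_zero {f : R[X]} {n r : ℕ}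
    (h : (f ^ p ^ n).coeff r ≠ 0) : p ^ n ∣ r := by
  by_contra hr
  rw [← map_iterateFrobenius_expand p f n, coeff_map,
    coeff_expand (pow_pos (expChar_pos R p) n), if_neg hr, map_zero] at h
  exact h rfl

theorem exists_eq_add_mul_pow_of_coeff_mul_pow_ne_zero {f g : R[X]} (hf : f.coeff 0 = 0)
    (hg : g.coeff 0 = 0) {n r : ℕ} (h : (f * g ^ p ^ n).coeff r ≠ 0) :
    ∃ w y, 0 < w ∧ w ≤ f.natDegree ∧ 0 < y ∧ r = w + p ^ n * y := by
  rw [coeff_mul] at h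
  obtain ⟨⟨w, v⟩, hwv, h_prod⟩ := exists_ne_zero_of_sum_ne_zero h
  have hfw := left_ne_zero_of_mul h_prod
  have hgv := right_ne_zero_of_mul h_prod
  obtain ⟨y, rfl⟩ := pow_dvd_of_coeff_pow_expChar_pow_ne_zero hgv
  refine ⟨w, y, Nat.pos_of_ne_zero ?_, le_natDegree_of_ne_zero hfw, Nat.pos_of_ne_zero ?_,
    (mem_antidiagonal.1 hwv).symm⟩
  · rintro rfl
    exact hfw hf
  · rintro rfl
    rw [mul_zero, coeff_zero_eq_eval_zero, eval_pow, ← coeff_zero_eq_eval_zero, hg,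
      zero_pow (pow_pos (expChar_pos R p) n).ne'] at hgv
    exact hgv rfl

variable {F : Type*} [Field F]

/-- The test polynomial detecting the coefficient of order `N` of a pole at `0` in the presence of
other poles at `c j`, `j ∈ J`. At each `c j` the factor of order `p` keeps the exponents of the
expansion off the multiples of `p ^ k`, and the factor of order `p ^ k` makes them large. -/
noncomputable def poleTest (p k N : ℕ) (J : Finset ι) (c : ι → F) : F[X] :=
  X ^ N * (∏ j ∈ J, (X - C (c j))) ^ (p + p ^ k)

variable {k N : ℕ} {J : Finset ι} {c : ι → F}

theorem natDegree_poleTest : (poleTest p k N J c).natDegree = N + #J * (p + p ^ k) := by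
  have h_monic : (∏ j ∈ J, (X - C (c j))).Monic := monic_prod_X_sub_C c J
  rw [poleTest, (monic_X_pow N).natDegree_mul (h_monic.pow _), natDegree_X_pow,
    h_monic.natDegree_pow, natDegree_finsetProd_X_sub_C_eq_card, mul_comm]

theorem coeff_zero_poleTest (hN : N ≠ 0) : (poleTest p k N J c).coeff 0 = 0 := by
  rw [poleTest, mul_coeff_zero, coeff_X_pow, if_neg hN.symm, zero_mul]

theorem coeff_poleTest_of_lt {r : ℕ} (hr : r < N) : (poleTest p k N J c).coeff r = 0 := by
  rw [poleTest, coeff_X_pow_mul', if_neg hr.not_ge]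

theorem coeff_poleTest_self_ne_zero (hc : ∀ j ∈ J, c j ≠ 0) :
    (poleTest p k N J c).coeff N ≠ 0 := by
  rw [poleTest, coeff_X_pow_mul', if_pos le_rfl, Nat.sub_self, coeff_zero_eq_eval_zero, eval_pow,
    eval_prod]
  exact pow_ne_zero _ (prod_ne_zero_iff.2 fun j hj => by simpa using hc j hj)

variable [Fact p.Prime] [CharP F p]

theorem isFrobeniusReduced_poleTest (hk : k ≠ 0) (hN : ¬ p ∣ N) :
    IsFrobeniusReduced p N (poleTest p k N J c) := by
  intro r hr s hs i h_conj
  have hNr : N ≤ r := not_lt.1 fun h => mem_support_iff.1 hr (coeff_poleTest_of_lt h)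
  have hpr : ¬ p ∣ r := by
    obtain ⟨l, rfl⟩ := Nat.exists_eq_succ_of_ne_zero hk
    have h_exp : p + p ^ (l + 1) = (1 + p ^ l) * p ^ 1 := by ring
    have h_coeff := mem_support_iff.1 hr
    rw [poleTest, coeff_X_pow_mul', if_pos hNr, h_exp, pow_mul] at h_coeff
    have h_dvd := pow_dvd_of_coeff_pow_expChar_pow_ne_zero h_coeff
    rw [pow_one] at h_dvd
    rwa [← Nat.sub_add_cancel hNr, Nat.dvd_add_right h_dvd]
  rcases h_conj with h | h
  · obtain rfl : i = 0 := by
      by_contra hi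
      exact hpr (h ▸ (dvd_pow_self p hi).mul_left s)
    simpa using h
  · have : r ≤ r * p ^ i := Nat.le_mul_of_pos_right r (pow_pos (NeZero.pos p) i)
    omega

theorem not_conj_of_coeff_taylor_poleTest_ne_zero (hk : N * (N + #J * p) < p ^ k) {j : ι}
    (hj : j ∈ J) {r s i : ℕ} (hr : (taylor (c j) (poleTest p k N J c)).coeff r ≠ 0) (hs : s ≤ N) :
    ¬ (r = s * p ^ i ∨ s = r * p ^ i) := by
  set V : F[X] := ∏ j ∈ J, (X - C (c j)) with hV
  have hV0 : (taylor (c j) V).coeff 0 = 0 := by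
    rw [taylor_coeff_zero, hV, eval_prod]
    exact prod_eq_zero hj (by simp)
  have hU0 : (taylor (c j) (X ^ N * V ^ p)).coeff 0 = 0 := by
    rw [taylor_mul, taylor_pow, taylor_pow, mul_coeff_zero, coeff_zero_eq_eval_zero (_ ^ p),
      eval_pow, ← coeff_zero_eq_eval_zero, hV0, zero_pow (NeZero.ne p), mul_zero]
  have hU_deg : (taylor (c j) (X ^ N * V ^ p)).natDegree ≤ N + #J * p := by
    rw [natDegree_taylor]
    refine natDegree_mul_le.trans
      (Nat.add_le_add (natDegree_X_pow_le N) (natDegree_pow_le.trans ?_))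
    rw [hV, natDegree_finsetProd_X_sub_C_eq_card, mul_comm]
  rw [poleTest, ← hV, pow_add, ← mul_assoc, taylor_mul, taylor_pow _ V (p ^ k)] at hr
  obtain ⟨w, y, hw, hw_le, hy, rfl⟩ := exists_eq_add_mul_pow_of_coeff_mul_pow_ne_zero hU0 hV0 hr
  have hNw : N * w < p ^ k := (Nat.mul_le_mul_left N (hw_le.trans hU_deg)).trans_lt hk
  rintro (h | h)
  · exact add_mul_pow_ne_mul_pow hw hNw hy hs h
  · have := Nat.le_mul_of_pos_right (w + p ^ k * y) (pow_pos (NeZero.pos p) i)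
    have := Nat.le_mul_of_pos_right (p ^ k) hy
    have := Nat.le_mul_of_pos_right N hw
    omega

end PoleTest

section ConstantTrace

variable {K F ι : Type*} [Field K] [Field F] [Fintype F] [Algebra K F] {p : ℕ} [Fact p.Prime]
  [CharP F p] {J : Finset ι} {ε : K}

theorem sum_eval_poleTest_mul_trace_eval_inv_sub {k N : ℕ} {c : ι → F}
    (hk : N * (N + #J * p) < p ^ k) (hcard : N * (N + #J * (p + p ^ k)) < Fintype.card F - 1)
    (hN : N ≠ 0) {j : ι} (hj : j ∈ J) {B : F[X]} (hB : B.natDegree ≤ N) :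
    ∑ u : F, (poleTest p k N J c).eval u *
      algebraMap K F (Algebra.trace K F (B.eval (u - c j)⁻¹)) = 0 := by
  set P := taylor (c j) (poleTest p k N J c) with hP
  have hP_coeff {s : ℕ} (hs : s ≤ N) : P.coeff s = 0 := by
    by_contra h
    exact not_conj_of_coeff_taylor_poleTest_ne_zero hk hj (i := 0) h hs (by simp)
  have hP_reduced : IsFrobeniusReduced p N P := fun r hr s hs _ h_conj =>
    (not_conj_of_coeff_taylor_poleTest_ne_zero hk hj (mem_support_iff.1 hr) hs h_conj).elim
  have hP_deg : N * P.natDegree < Fintype.card F - 1 := by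
    rwa [hP, natDegree_taylor, natDegree_poleTest]
  calc ∑ u : F, (poleTest p k N J c).eval u *
        algebraMap K F (Algebra.trace K F (B.eval (u - c j)⁻¹))
      = ∑ u : F, P.eval u * algebraMap K F (Algebra.trace K F (B.eval u⁻¹)) := by
        rw [← Equiv.sum_comp (Equiv.addRight (c j))]
        simp [hP, taylor_eval]
    _ = -∑ s ∈ range (N + 1), B.coeff s * P.coeff s :=
        hP_reduced.sum_eval_mul_trace_eval_inv (hP_coeff N.zero_le) hP_deg hN hB
    _ = 0 := by
        rw [sum_eq_zero fun s hs => by rw [hP_coeff (mem_range_succ_iff.1 hs), mul_zero], neg_zero]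

theorem sum_eval_poleTest_mul_trace_eval_inv {k N : ℕ} {c : ι → F} (hk : k ≠ 0)
    (hcard : N * (N + #J * (p + p ^ k)) < Fintype.card F - 1) (hN : ¬ p ∣ N)
    {A : F[X]} (hA : A.natDegree ≤ N) :
    ∑ u : F, (poleTest p k N J c).eval u * algebraMap K F (Algebra.trace K F (A.eval u⁻¹)) =
      -(A.coeff N * (poleTest p k N J c).coeff N) := by
  have hN0 : N ≠ 0 := fun h => hN (h ▸ dvd_zero p)
  rw [(isFrobeniusReduced_poleTest hk hN).sum_eval_mul_trace_eval_inv (coeff_zero_poleTest hN0)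
      (by rwa [natDegree_poleTest]) hN0 hA, sum_range_succ,
    sum_eq_zero fun s hs => by rw [coeff_poleTest_of_lt (mem_range.1 hs), mul_zero], zero_add]

theorem coeff_eq_zero_of_trace_eval_inv_eq {k N : ℕ} {c : ι → F}
    (hk : N * (N + #J * p) < p ^ k) (hcard : N * (N + #J * (p + p ^ k)) < Fintype.card F - 1)
    (hN : ¬ p ∣ N) (hc : ∀ j ∈ J, c j ≠ 0) {A : F[X]} {B : ι → F[X]} (hA : A.natDegree ≤ N)
    (hB : ∀ j ∈ J, (B j).natDegree ≤ N)
    (h : ∀ u : F, Algebra.trace K F (A.eval u⁻¹ + ∑ j ∈ J, (B j).eval (u - c j)⁻¹) = ε) :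
    A.coeff N = 0 := by
  set P := poleTest p k N J c with hP
  have hN0 : N ≠ 0 := fun h => hN (h ▸ dvd_zero p)
  have hk0 : k ≠ 0 := by
    rintro rfl
    have : N ≤ N * (N + #J * p) := Nat.le_mul_of_pos_right N (by omega)
    rw [pow_zero] at hk
    omega
  have hP_deg : P.natDegree < Fintype.card F - 1 := by
    rw [hP, natDegree_poleTest]
    exact (Nat.le_mul_of_pos_left _ (Nat.pos_of_ne_zero hN0)).trans_lt hcard
  have h_sum : -(A.coeff N * P.coeff N) = 0 := calc
    -(A.coeff N * P.coeff N)
      = ∑ u : F, P.eval u * algebraMap K F (Algebra.trace K F (A.eval u⁻¹)) +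
          ∑ j ∈ J, ∑ u : F, P.eval u *
            algebraMap K F (Algebra.trace K F ((B j).eval (u - c j)⁻¹)) := by
        rw [sum_eval_poleTest_mul_trace_eval_inv hk0 hcard hN hA, sum_eq_zero fun j hj =>
          sum_eval_poleTest_mul_trace_eval_inv_sub hk hcard hN0 hj (hB j hj), add_zero]
    _ = ∑ u : F, P.eval u * algebraMap K F ε := by
        rw [sum_comm, ← sum_add_distrib]
        refine sum_congr rfl fun u _ => ?_
        rw [← h u, map_add, map_add, map_sum, map_sum, mul_add, mul_sum]
    _ = 0 := by rw [← sum_mul, sum_eval_eq_zero_of_natDegree_lt hP_deg, zero_mul]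
  exact (mul_eq_zero.1 (neg_eq_zero.1 h_sum)).resolve_right (coeff_poleTest_self_ne_zero hc)

theorem coeff_eq_zero_of_trace_eval_inv_pow_eq {e t : ℕ} {x : ι → F} {x₀ : F} (he : 0 < e)
    (ht : ¬ p ∣ t)
    (hcard : e * t * (e * t + #J * (p + p * (e * t * (e * t + #J * p)))) < Fintype.card F - 1)
    (hx : ∀ j ∈ J, x j ≠ x₀) {A : F[X]} {B : ι → F[X]} (hA : A.natDegree ≤ t)
    (hB : ∀ j ∈ J, (B j).natDegree ≤ t)
    (h : ∀ u : F, Algebra.trace K F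
      (A.eval ((u - x₀)⁻¹ ^ e) + ∑ j ∈ J, (B j).eval ((u - x j)⁻¹ ^ e)) = ε) :
    A.coeff t = 0 := by
  have hp : p.Prime := Fact.out
  obtain ⟨l, e', he', rfl⟩ := Nat.exists_eq_pow_mul_and_not_dvd he.ne' p hp.ne_one
  have he'_pos : 0 < e' := Nat.pos_of_ne_zero fun h0 => he' (h0 ▸ dvd_zero p)
  have hN_le : t * e' ≤ p ^ l * e' * t := by
    rw [mul_assoc, mul_comm t]
    exact Nat.le_mul_of_pos_left _ (pow_pos hp.pos l)
  obtain ⟨k, hk, hk_card⟩ := exists_lt_pow_and_mul_add_mul_lt hp.one_lt hN_le hcard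
  rw [← coeff_expand_mul he'_pos A t]
  refine coeff_eq_zero_of_trace_eval_inv_eq (ε := ε) (c := fun j => (x j - x₀) ^ p ^ l)
    (B := fun j => expand F e' (B j)) hk hk_card (hp.not_dvd_mul ht he')
    (fun j hj => pow_ne_zero _ (sub_ne_zero.2 (hx j hj))) ?_ (fun j hj => ?_) fun v => ?_
  · rw [natDegree_expand]
    exact Nat.mul_le_mul_right e' hA
  · rw [natDegree_expand]
    exact Nat.mul_le_mul_right e' (hB j hj)
  · obtain ⟨w, rfl⟩ := (bijective_iterateFrobenius F p l).surjective v
    have h_shift (j : ι) : w + x₀ - x j = w - (x j - x₀) := by ring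
    rw [← h (w + x₀)]
    simp only [expand_eval, iterateFrobenius_def, ← sub_pow_char_pow, ← inv_pow, ← pow_mul,
      add_sub_cancel_right, h_shift]

theorem eq_zero_of_trace_sum_eval_mul_inv_pow_eq {e : ℕ} {Q : F[X]} {x y : ι → F} {x₀ y₀ : F}
    (he : 0 < e) (hQ : ¬ p ∣ Q.natDegree)
    (hcard : e * Q.natDegree * (e * Q.natDegree +
      #J * (p + p * (e * Q.natDegree * (e * Q.natDegree + #J * p)))) < Fintype.card F - 1)
    (hx : ∀ j ∈ J, x j ≠ x₀)
    (h : ∀ u : F, Algebra.trace K F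
      (Q.eval (y₀ * (u - x₀)⁻¹ ^ e) + ∑ j ∈ J, Q.eval (y j * (u - x j)⁻¹ ^ e)) = ε) :
    y₀ = 0 := by
  have h_deg (z : F) : (Q.comp (C z * X)).natDegree ≤ Q.natDegree := by
    have h_lin : (C z * X : F[X]).natDegree ≤ 1 := (natDegree_C_mul_le z X).trans natDegree_X_le
    simpa using natDegree_comp_le.trans (Nat.mul_le_mul_left Q.natDegree h_lin)
  have h_coeff : (Q.comp (C y₀ * X)).coeff Q.natDegree = 0 :=
    coeff_eq_zero_of_trace_eval_inv_pow_eq (B := fun j => Q.comp (C (y j) * X)) he hQ hcard hx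
      (h_deg y₀) (fun j _ => h_deg (y j))
      (by simpa only [eval_comp, eval_mul, eval_C, eval_X] using h)
  have hQ0 : Q.natDegree ≠ 0 := fun h0 => hQ (h0 ▸ dvd_zero p)
  rw [comp_C_mul_X_coeff, coeff_natDegree, mul_eq_zero, leadingCoeff_eq_zero] at h_coeff
  rcases h_coeff with rfl | h_pow
  · exact absurd natDegree_zero hQ0
  · exact pow_eq_zero_iff hQ0 |>.1 h_pow

end ConstantTrace

section SecondDerivative

variable {K F : Type*} [Field K] [Field F] [Fintype F] [Algebra K F] [CharP F 2] {ε : K}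

theorem eq_zero_of_trace_three_poles_eq {e : ℕ} {Q : F[X]} (he : 0 < e) (hQ : Odd Q.natDegree)
    (hcard : 25 * (e * Q.natDegree) ^ 3 + 1 < Fintype.card F) {x₀ x₁ x₂ y₀ y₁ y₂ : F}
    (h₁ : x₁ ≠ x₀) (h₂ : x₂ ≠ x₀)
    (h : ∀ u : F, Algebra.trace K F (Q.eval (y₀ * (u + x₀)⁻¹ ^ e) +
      Q.eval (y₁ * (u + x₁)⁻¹ ^ e) + Q.eval (y₂ * (u + x₂)⁻¹ ^ e)) = ε) :
    y₀ = 0 := by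
  have hN : 0 < e * Q.natDegree := Nat.mul_pos he hQ.pos
  refine eq_zero_of_trace_sum_eval_mul_inv_pow_eq (p := 2) (ι := Fin 2) (J := univ) (x := ![x₁, x₂])
    (y := ![y₁, y₂]) (x₀ := x₀) (ε := ε) he hQ.not_two_dvd_nat ?_ ?_ fun u => ?_
  · rw [card_univ, Fintype.card_fin]
    generalize e * Q.natDegree = N at hN hcard
    have h_sq : N ≤ N ^ 2 := Nat.le_self_pow two_ne_zero N
    have h_cube : N ^ 2 ≤ N ^ 3 := Nat.pow_le_pow_right hN (by norm_num)
    have : N * (N + 2 * (2 + 2 * (N * (N + 2 * 2)))) = 4 * N ^ 3 + 17 * N ^ 2 + 4 * N := by ring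
    omega
  · simp [Fin.forall_fin_two, h₁, h₂]
  · rw [← h u]
    simp [CharTwo.sub_eq_add, Fin.sum_univ_two, add_assoc]

theorem trace_three_poles_ne_const {e : ℕ} {Q : F[X]} (he : 0 < e) (hQ : Odd Q.natDegree)
    (hcard : 25 * (e * Q.natDegree) ^ 3 + 1 < Fintype.card F) {a b c d : F}
    (habcd : a * d + b * c ≠ 0) :
    ¬ ∀ u : F, Algebra.trace K F (Q.eval (b * (u + a)⁻¹ ^ e) + Q.eval (d * (u + c)⁻¹ ^ e) +
      Q.eval ((b + d) * (u + (a + c))⁻¹ ^ e)) = ε := by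
  intro h
  have hb (hc : c ≠ 0) (hca : c ≠ a) : b = 0 :=
    eq_zero_of_trace_three_poles_eq he hQ hcard hca (by simpa using hc) h
  have hd (ha : a ≠ 0) (hac : a ≠ c) : d = 0 :=
    eq_zero_of_trace_three_poles_eq he hQ hcard (x₁ := a) (x₂ := a + c) (y₁ := b) (y₂ := b + d)
      hac (by simpa using ha) fun u => (congrArg _ (by ring)).trans (h u)
  have hbd (ha : a ≠ 0) (hc : c ≠ 0) : b + d = 0 :=
    eq_zero_of_trace_three_poles_eq he hQ hcard (x₀ := a + c) (x₁ := a) (x₂ := c) (y₁ := b)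
      (y₂ := d) (by simpa using hc) (by simpa using ha) fun u => (congrArg _ (by ring)).trans (h u)
  apply habcd
  rcases eq_or_ne a c with rfl | hac
  · rcases eq_or_ne a 0 with rfl | ha
    · ring
    · linear_combination a * hbd ha ha
  rcases eq_or_ne a 0 with rfl | ha
  · rw [hb hac.symm hac.symm]
    ring
  rcases eq_or_ne c 0 with rfl | hc
  · rw [hd ha hac]
    ring
  · rw [hb hc hac.symm, hd ha hac]
    ring

end SecondDerivative

theorem twentyFive_mul_pow_three_add_one_lt_two_pow {m N : ℕ} (hN : 0 < N)
    (h : (3 * N : ℝ) ≤ 2 ^ ((m : ℝ) / 4) - 1) : 25 * N ^ 3 + 1 < 2 ^ m := by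
  have h_root : ((2 : ℝ) ^ ((m : ℝ) / 4)) ^ 4 = 2 ^ m := by
    rw [← Real.rpow_mul_natCast (by norm_num), Nat.cast_ofNat, div_mul_cancel₀ _ (by norm_num),
      Real.rpow_natCast]
  have h_pow : (3 * N + 1) ^ 4 ≤ 2 ^ m := by
    have h_le : (3 * N + 1 : ℝ) ≤ 2 ^ ((m : ℝ) / 4) := by linarith
    have := pow_le_pow_left₀ (by positivity) h_le 4
    rw [h_root] at this
    exact_mod_cast this
  calc 25 * N ^ 3 + 1 < (3 * N + 1) ^ 4 := by ring_nf; nlinarith [pow_pos hN 3]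
    _ ≤ 2 ^ m := h_pow

theorem gPSap_second_derivative_nonconstant_general {F : Type*} [Field F] [Finite F]
    [Algebra (ZMod 2) F] {e : ℕ} (he : 0 < e) {Q : F[X]} (hQ : Odd Q.natDegree)
    (hcard : 25 * (e * Q.natDegree) ^ 3 + 1 < Nat.card F) {a b c d : F}
    (habcd : a * d + b * c ≠ 0) {f : F × F → ZMod 2}
    (hf : ∀ x y, f (x, y) = Algebra.trace (ZMod 2) F
      (Q.eval ((b * x + d * y) * ((a * x + c * y)⁻¹) ^ e))) :
    ¬ ∃ ε : ZMod 2, ∀ p : F × F, D2 f (1, 0) (0, 1) p = ε := by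
  rintro ⟨ε, hε⟩
  have : Fintype F := Fintype.ofFinite F
  have : CharP F 2 := charP_of_injective_algebraMap (algebraMap (ZMod 2) F).injective 2
  rw [Nat.card_eq_fintype_card] at hcard
  refine trace_three_poles_ne_const (ε := ε - Algebra.trace (ZMod 2) F (Q.eval 0)) he hQ hcard
    habcd fun u => ?_
  obtain ⟨x, y, h_num, h_den⟩ : ∃ x y, b * x + d * y = 0 ∧ a * x + c * y = u := by
    refine ⟨d * u / (a * d + b * c), b * u / (a * d + b * c), ?_, ?_⟩
    · rw [← mul_div_assoc, ← mul_div_assoc, ← add_div, div_eq_zero_iff]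
      exact .inl (by linear_combination b * d * u * CharTwo.two_eq_zero (R := F))
    · field_simp
  rw [eq_sub_iff_add_eq, ← hε (x, y)]
  have h_dx : b * (x + 1) + d * y = b := by linear_combination h_num
  have h_dy : b * x + d * (y + 1) = d := by linear_combination h_num
  have h_dxy : b * (x + 1) + d * (y + 1) = b + d := by linear_combination h_num
  have h_ux : a * (x + 1) + c * y = u + a := by linear_combination h_den
  have h_uy : a * x + c * (y + 1) = u + c := by linear_combination h_den
  have h_uxy : a * (x + 1) + c * (y + 1) = u + (a + c) := by linear_combination h_den
  simp only [D2, Prod.mk_add_mk, add_zero, hf, h_num, h_dx, h_dy, h_dxy, h_den, h_ux, h_uy, h_uxy,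
    zero_mul, map_add]
  ring

/-- Proposition 4.3 (key computation): for a permutation polynomial `Q` of odd degree `t`
with `3et ≤ 2^{m/4} - 1`, and `ad + bc ≠ 0`, the second-order derivative
`D_{(1,0)} D_{(0,1)}` of `f̃(x,y) = Tr(Q((bx+dy)(ax+cy)^{-e}))` is not constant. -/
theorem gPSap_second_derivative_nonconstant
    (m : ℕ) (hm : 4 < m) (e : ℕ) (he : 0 < e) (hgcd : Nat.gcd e (2 ^ m - 1) = 1)
    (Q : Polynomial (GaloisField 2 m)) (t : ℕ) (ht : Q.natDegree = t) (htodd : Odd t)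
    (hQperm : Function.Bijective fun x => Q.eval x)
    (hdeg : (3 * e * t : ℝ) ≤ 2 ^ ((m : ℝ) / 4) - 1)
    (a b c d : GaloisField 2 m) (habcd : a * d + b * c ≠ 0)
    (f : GaloisField 2 m × GaloisField 2 m → ZMod 2)
    (hf : ∀ x y, f (x, y) = Tr m (Q.eval ((b * x + d * y) * ((a * x + c * y)⁻¹) ^ e))) :
    ¬ ∃ ε : ZMod 2, ∀ p : GaloisField 2 m × GaloisField 2 m,
        D2 f (1, 0) (0, 1) p = ε := by
  subst ht
  have hN : 0 < e * Q.natDegree := Nat.mul_pos he htodd.pos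
  refine gPSap_second_derivative_nonconstant_general he htodd ?_ habcd hf
  rw [GaloisField.card 2 m (by omega)]
  exact twentyFive_mul_pow_three_add_one_lt_two_pow hN (by push_cast; linarith)
end

section
/- Let m ≥ 1, let ℓ be an integer with 0 ≤ ℓ ≤ m, let e be a positive integer, let Q : F_{2^m} → F_{2^m} be any function, let a, b, c, d ∈ F_{2^m} with ad + bc ≠ 0, and let ε ∈ F_2. Define f*, f̂ : F_{2^m} × F_{2^m} → F_2 by f*(x,y) = Tr_1^m(Q(y^{2^{m−ℓ}} · ((x^{2^{m−ℓ}})⁻¹)^e)) and f̂(x,y) = Tr_1^m(Q((b^{2^{m−ℓ}} x + d^{2^{m−ℓ}} y) · ((a^{2^{m−ℓ}} x + c^{2^{m−ℓ}} y)⁻¹)^e)). Then D_{(a,b)} D_{(c,d)} f*(x,y) = ε for all (x,y) ∈ F_{2^m} × F_{2^m} if and only if D_{(1,0)} D_{(0,1)} f̂(x,y) = ε for all (x,y) ∈ F_{2^m} × F_{2^m}. -/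
/-!
Second-order derivatives commute with additive maps: `D_u D_v (f ∘ T) = (D_{Tu} D_{Tv} f) ∘ T`.
Let `M` be the linear map with columns `(a, b)` and `(c, d)`, and let `σ` be the Frobenius power
`x ↦ x ^ 2 ^ (m - ℓ)` applied to both coordinates. Because `σ` is a ring homomorphism,
`f̂ ∘ σ = f* ∘ M`. Now `M` sends the standard basis to `(a, b), (c, d)`, `σ` fixes the standard
basis, and both maps are onto, so the two derivatives take the same values.
-/

section SecondDerivative

variable {V W : Type*} [AddCommGroup V] [AddCommGroup W]

theorem D2_comp_addMonoidHom (f : W → ZMod 2) (T : V →+ W) (u v x : V) :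
    D2 (f ∘ T) u v x = D2 f (T u) (T v) (T x) := by
  simp only [D2, Function.comp_apply, map_add]

theorem forall_D2_comp_eq_iff (f : W → ZMod 2) {T : V →+ W} (hT : Function.Surjective T)
    (u v : V) (ε : ZMod 2) :
    (∀ x, D2 (f ∘ T) u v x = ε) ↔ ∀ y, D2 f (T u) (T v) y = ε := by
  simp only [D2_comp_addMonoidHom, hT.forall]

end SecondDerivative

section PairCombination

variable {R M : Type*} [Semiring R] [AddCommMonoid M] [Module R M] (u v : M)

/-- The linear map `(s, t) ↦ s • u + t • v`; for `u, v : R × R` it is the `2 × 2` matrix with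
columns `u` and `v`. -/
def pairCombination : R × R →ₗ[R] M :=
  (LinearMap.toSpanSingleton R M u).coprod (LinearMap.toSpanSingleton R M v)

theorem pairCombination_apply (z : R × R) :
    pairCombination u v z = z.1 • u + z.2 • v :=
  rfl

end PairCombination

theorem pairCombination_surjective {R : Type*} [CommRing R] {a b c d : R}
    (hdet : IsUnit (a * d - b * c)) :
    Function.Surjective (pairCombination (R := R) (a, b) (c, d)) := by
  rintro ⟨x, y⟩
  obtain ⟨δ, hδ⟩ := hdet.exists_right_inv
  -- Cramer's rule, with `δ` the inverse of the determinant.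
  refine ⟨(δ * (d * x - c * y), δ * (a * y - b * x)), ?_⟩
  ext
  · simp only [pairCombination_apply, Prod.fst_add, Prod.smul_fst, smul_eq_mul]
    linear_combination x * hδ
  · simp only [pairCombination_apply, Prod.snd_add, Prod.smul_snd, smul_eq_mul]
    linear_combination y * hδ

theorem gPSap_derivative_change_of_variables_general {R S : Type*} [CommRing R] [CommRing S]
    (σ : R →+* S) (hσ : Function.Surjective σ) (F : S × S → ZMod 2)
    (a b c d : R) (hdet : IsUnit (a * d - b * c)) (ε : ZMod 2)
    (fstar : R × R → ZMod 2) (fhat : S × S → ZMod 2)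
    (hfstar : ∀ x y, fstar (x, y) = F (σ x, σ y))
    (hfhat : ∀ x y, fhat (x, y) = F (σ a * x + σ c * y, σ b * x + σ d * y)) :
    (∀ p, D2 fstar (a, b) (c, d) p = ε) ↔ ∀ p, D2 fhat (1, 0) (0, 1) p = ε := by
  let M : R × R →+ R × R := (pairCombination (R := R) (a, b) (c, d)).toAddMonoidHom
  let σ₂ : R × R →+ S × S := (σ.prodMap σ).toAddMonoidHom
  have hM : Function.Surjective M := pairCombination_surjective hdet
  have hσ₂ : Function.Surjective σ₂ := hσ.prodMap hσ
  have M_basis : M (1, 0) = (a, b) ∧ M (0, 1) = (c, d) := by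
    simp [M, pairCombination_apply]
  have σ₂_basis : σ₂ (1, 0) = (1, 0) ∧ σ₂ (0, 1) = (0, 1) := by
    simp [σ₂]
  have intertwine : fstar ∘ M = fhat ∘ σ₂ := by
    ext ⟨x, y⟩
    simp [M, σ₂, pairCombination_apply, hfstar, hfhat, mul_comm]
  calc (∀ p, D2 fstar (a, b) (c, d) p = ε)
      ↔ ∀ z, D2 (fstar ∘ M) (1, 0) (0, 1) z = ε := by
        rw [forall_D2_comp_eq_iff _ hM, M_basis.1, M_basis.2]
    _ ↔ ∀ z, D2 (fhat ∘ σ₂) (1, 0) (0, 1) z = ε := by rw [intertwine]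
    _ ↔ ∀ p, D2 fhat (1, 0) (0, 1) p = ε := by
        rw [forall_D2_comp_eq_iff _ hσ₂, σ₂_basis.1, σ₂_basis.2]

/-- Lemma 4.5: `D_{(a,b)} D_{(c,d)}` of `f*(x,y) = Tr(Q(y^{2^{m-ℓ}} (x^{2^{m-ℓ}})^{-e}))`
is constantly `ε` if and only if `D_{(1,0)} D_{(0,1)}` of
`f̂(x,y) = Tr(Q((b^{2^{m-ℓ}}x + d^{2^{m-ℓ}}y)(a^{2^{m-ℓ}}x + c^{2^{m-ℓ}}y)^{-e}))`
is constantly `ε`. -/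
theorem gPSap_derivative_change_of_variables
    (m : ℕ) (hm : 1 ≤ m) (ℓ : ℕ) (hℓ : ℓ ≤ m) (e : ℕ) (he : 0 < e)
    (Q : GaloisField 2 m → GaloisField 2 m)
    (a b c d : GaloisField 2 m) (habcd : a * d + b * c ≠ 0) (ε : ZMod 2)
    (fstar fhat : GaloisField 2 m × GaloisField 2 m → ZMod 2)
    (hfstar : ∀ x y, fstar (x, y) =
      Tr m (Q (y ^ 2 ^ (m - ℓ) * (((x ^ 2 ^ (m - ℓ))⁻¹) ^ e))))
    (hfhat : ∀ x y, fhat (x, y) =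
      Tr m (Q ((b ^ 2 ^ (m - ℓ) * x + d ^ 2 ^ (m - ℓ) * y) *
        (((a ^ 2 ^ (m - ℓ) * x + c ^ 2 ^ (m - ℓ) * y)⁻¹) ^ e)))) :
    (∀ p : GaloisField 2 m × GaloisField 2 m, D2 fstar (a, b) (c, d) p = ε) ↔
    (∀ p : GaloisField 2 m × GaloisField 2 m, D2 fhat (1, 0) (0, 1) p = ε) :=
  gPSap_derivative_change_of_variables_general (iterateFrobenius (GaloisField 2 m) 2 (m - ℓ))
    (bijective_iterateFrobenius _ _ _).surjective (fun z => Tr m (Q (z.2 * z.1⁻¹ ^ e)))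
    a b c d (by rwa [CharTwo.sub_eq_add, isUnit_iff_ne_zero]) ε fstar fhat hfstar hfhat
end

section
/- Let m ≥ 4 and let e be an odd positive integer with gcd(e, 2^m − 1) = 1 and 4e ≤ 2^{m/4} − 1 (an inequality of real numbers). Define f̃ : F_{2^m} × F_{2^m} → F_2 by f̃(x,y) = Tr_1^m(y · (x⁻¹)^e). Then every M-subspace of f̃ of F_2-dimension at least 2 is contained in {0} × F_{2^m}; in particular, {0} × F_{2^m} is the unique M-subspace of f̃ of dimension m. -/
/-- An `M`-subspace of `f` : a subspace on which all second-order derivatives of `f` vanish. -/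
def IsMSubspace {V : Type*} [AddCommGroup V] [Module (ZMod 2) V] (f : V → ZMod 2)
    (U : Submodule (ZMod 2) V) : Prop :=
  ∀ a ∈ U, ∀ b ∈ U, ∀ x, D2 f a b x = 0

/-!
As `x⁻¹ ^ e = x ^ d` for `d = 2 ^ m - 1 - e`, everything is about the power map `x ^ d`. Let `D` be
the set of binary digits of `d` and replace the conjugates `x ^ 2 ^ t` of `x` by independent
variables `z t`: then `x ^ d` becomes `∏ t ∈ D, z t`, the conjugates of `x ^ d` become the products
over the cyclic translates of `D`, and an expression that is affine in each `z t` vanishes for all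
`x` only if it vanishes for all `z` (Kronecker substitution).

If an `M`-subspace contains `(a, a')` with `a ≠ 0`, then it contains no `(0, b)` with `b ≠ 0`, for
otherwise `Tr (b * (x ^ d + (x + a) ^ d))` would vanish identically, which the point `z` equal to
the conjugates of `a` on `D` and to `0` off `D` excludes. In dimension at least `2` there are thus
two elements with distinct nonzero first components `a`, `b`, and then the second derivative of
`x ^ d` in the directions `a`, `b` vanishes, which is impossible once `D` has three elements.
-/

open Finset MvPolynomial
open scoped Pointwise

section KroneckerSubstitution

variable {m n : ℕ}

lemma sum_mul_pow_lt_pow {s : Fin m → ℕ} (hs : ∀ i, s i ≤ n) :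
    ∑ i, s i * (n + 1) ^ (i : ℕ) < (n + 1) ^ m := by
  have h := (finFunctionFinEquiv fun i ↦ (⟨s i, Nat.lt_succ_of_le (hs i)⟩ : Fin (n + 1))).isLt
  rwa [finFunctionFinEquiv_apply] at h

lemma eq_of_sum_mul_pow_eq {s t : Fin m → ℕ} (hs : ∀ i, s i ≤ n) (ht : ∀ i, t i ≤ n)
    (h : ∑ i, s i * (n + 1) ^ (i : ℕ) = ∑ i, t i * (n + 1) ^ (i : ℕ)) : s = t := by
  have heq : (fun i ↦ (⟨s i, Nat.lt_succ_of_le (hs i)⟩ : Fin (n + 1))) =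
      fun i ↦ ⟨t i, Nat.lt_succ_of_le (ht i)⟩ :=
    finFunctionFinEquiv.injective <| Fin.ext <| by simpa only [finFunctionFinEquiv_apply] using h
  exact funext fun i ↦ congrArg Fin.val (congrFun heq i)

/-- Kronecker substitution turns distinct monomials of `P` into distinct powers of `x`, all of
degree less than the number of points. -/
theorem exists_eval_pow_ne_zero {R : Type*} [CommRing R] [IsDomain R] [Finite R]
    (hcard : (n + 1) ^ m ≤ Nat.card R) {P : MvPolynomial (Fin m) R}
    (hP : P ∈ restrictDegree (Fin m) R n) (hP0 : P ≠ 0) :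
    ∃ x : R, eval (fun i : Fin m ↦ x ^ (n + 1) ^ (i : ℕ)) P ≠ 0 := by
  have := Fintype.ofFinite R
  rw [mem_restrictDegree] at hP
  rw [Nat.card_eq_fintype_card] at hcard
  by_contra! hzero
  let Q : Polynomial R :=
    ∑ s ∈ P.support, Polynomial.C (coeff s P) * Polynomial.X ^ ∑ i, s i * (n + 1) ^ (i : ℕ)
  have hdeg : Q.natDegree < Fintype.card R := by
    refine (Polynomial.natDegree_sum_le_of_forall_le (n := (n + 1) ^ m - 1) _ _
      fun s hs ↦ ?_).trans_lt (Nat.sub_one_lt_of_le (pow_pos n.succ_pos m) hcard)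
    exact (Polynomial.natDegree_C_mul_X_pow_le _ _).trans
      (Nat.le_sub_one_of_lt (sum_mul_pow_lt_pow (hP s hs)))
  have hQ : Q = 0 := by
    refine Polynomial.eq_zero_of_natDegree_lt_card_of_eval_eq_zero Q Function.injective_id
      (fun x ↦ ?_) hdeg
    rw [id, ← hzero x, eval_eq']
    simp only [Q, Polynomial.eval_finsetSum, Polynomial.eval_mul, Polynomial.eval_C,
      Polynomial.eval_pow, Polynomial.eval_X, ← pow_mul, prod_pow_eq_pow_sum,
      mul_comm ((n + 1) ^ _)]
  obtain ⟨s, hs⟩ := ne_zero_iff.1 hP0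
  have hs' := mem_support_iff.2 hs
  have hcoeff : Q.coeff (∑ i, s i * (n + 1) ^ (i : ℕ)) = coeff s P := by
    simp only [Q, Polynomial.finsetSum_coeff, Polynomial.coeff_C_mul_X_pow]
    rw [sum_eq_single_of_mem s hs' fun t ht hts ↦ if_neg fun h ↦ hts <| DFunLike.coe_injective
      (eq_of_sum_mul_pow_eq (hP s hs') (hP t ht) h).symm, if_pos rfl]
  exact hs (by rw [← hcoeff, hQ, Polynomial.coeff_zero])

end KroneckerSubstitution

section ShiftedMonomial

variable {ι R : Type*} [CommRing R]

/-- The multi-affine polynomial `∏_{t ∈ D} (X_t + a_t)`. For `a = 0` it polarizes the power map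
whose exponent has binary digit set `D`, and in general it polarizes the translates of that map. -/
noncomputable def shiftedMonomial (D : Finset ι) (a : ι → R) : MvPolynomial ι R :=
  ∏ t ∈ D, (X t + C (a t))

@[simp]
lemma eval_shiftedMonomial (D : Finset ι) (a z : ι → R) :
    eval z (shiftedMonomial D a) = ∏ t ∈ D, (z t + a t) := by
  simp [shiftedMonomial]

lemma shiftedMonomial_mem_restrictDegree [Nontrivial R] (D : Finset ι) (a : ι → R) :
    shiftedMonomial D a ∈ restrictDegree ι R 1 := by
  classical
  refine (mem_restrictDegree _ _ _).2 fun s hs i ↦ degreeOf_le_iff.1 ?_ s hs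
  calc degreeOf i (shiftedMonomial D a)
      ≤ ∑ t ∈ D, degreeOf i (X t + C (a t)) := degreeOf_prod_le _ _ _
    _ ≤ ∑ t ∈ D, if i = t then 1 else 0 := sum_le_sum fun t _ ↦
        (degreeOf_add_le _ _ _).trans (by simp [degreeOf_X])
    _ ≤ 1 := by rw [sum_ite_eq]; split_ifs <;> simp

variable [IsDomain R] [CharP R 2] {a b : ι → R}

/-- The point `z` kills three of the four products, each through its own index of `D`. -/
lemma exists_prod_second_derivative_ne_zero {D : Finset ι} (hD : 2 < #D)
    (ha : ∀ t, a t ≠ 0) (hb : ∀ t, b t ≠ 0) (hab : ∀ t, a t ≠ b t) :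
    ∃ z : ι → R, ∏ t ∈ D, z t + ∏ t ∈ D, (z t + a t) + ∏ t ∈ D, (z t + b t) +
      ∏ t ∈ D, (z t + (a t + b t)) ≠ 0 := by
  classical
  obtain ⟨i, hi, j, hj, k, hk, hij, hik, hjk⟩ := two_lt_card.1 hD
  let z : ι → R := fun t ↦ if t = j then b t else if t = k then a t + b t else 0
  have hz : ∏ t ∈ D, z t = 0 := prod_eq_zero hi (by simp [z, hij, hik])
  have hzb : ∏ t ∈ D, (z t + b t) = 0 :=
    prod_eq_zero hj (by simp [z, CharTwo.add_self_eq_zero])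
  have hzab : ∏ t ∈ D, (z t + (a t + b t)) = 0 :=
    prod_eq_zero hk (by simp [z, hjk.symm, CharTwo.add_self_eq_zero])
  refine ⟨z, ?_⟩
  rw [hz, hzb, hzab, zero_add, add_zero, add_zero]
  refine prod_ne_zero_iff.2 fun t _ ↦ ?_
  simp only [z]
  split_ifs
  · exact fun h ↦ hab t (CharTwo.add_eq_zero.1 h).symm
  · rw [add_right_comm, CharTwo.add_self_eq_zero, zero_add]
    exact hb t
  · rw [zero_add]
    exact ha t

/-- At the point `z` equal to `a` on `D` and `0` off `D`, only the translate `0 +ᵥ D` survives: the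
other translates leave `D`, while every translate meets `D`. -/
lemma exists_sum_prod_vadd_derivative_ne_zero {G : Type*} [AddGroup G] [Fintype G] [DecidableEq G]
    {D : Finset G} (hD : Fintype.card G < 2 * #D) (hstab : AddAction.stabilizer G D = ⊥)
    {c a : G → R} (hc : c 0 ≠ 0) (ha : ∀ t, a t ≠ 0) :
    ∃ z : G → R, ∑ i, c i * (∏ t ∈ i +ᵥ D, z t + ∏ t ∈ i +ᵥ D, (z t + a t)) ≠ 0 := by
  let z : G → R := fun t ↦ if t ∈ D then a t else 0
  have hmeet (i : G) : ∏ t ∈ i +ᵥ D, (z t + a t) = 0 := by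
    have hcard : #(univ : Finset G) < #(i +ᵥ D) + #D := by
      rw [card_univ, card_vadd_finset]
      omega
    obtain ⟨t, ht⟩ :=
      inter_nonempty_of_card_lt_card_add_card (subset_univ _) (subset_univ _) hcard
    rw [mem_inter] at ht
    exact prod_eq_zero ht.1 (by simp [z, ht.2, CharTwo.add_self_eq_zero])
  have hleave (i : G) (hi : i ≠ 0) : ∏ t ∈ i +ᵥ D, z t = 0 := by
    have hsub : ¬ i +ᵥ D ⊆ D := by
      rwa [← AddAction.mem_stabilizer_finset_iff_vadd_finset_subset, hstab, AddSubgroup.mem_bot]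
    obtain ⟨t, ht, htD⟩ := not_subset.1 hsub
    exact prod_eq_zero ht (if_neg htD)
  refine ⟨z, ?_⟩
  rw [Fintype.sum_eq_single 0 fun i hi ↦ by rw [hmeet, hleave i hi, add_zero, mul_zero], hmeet,
    zero_vadd, add_zero]
  exact mul_ne_zero hc <| prod_ne_zero_iff.2 fun t ht ↦ by simpa [z, ht] using ha t

end ShiftedMonomial

section BinaryDigits

/-- The set of positions, among the lowest `m`, of the binary digits `1` of `d`. Positions live in
`Fin m`, whose addition is cyclic, so that translating them is multiplying by a power of `2` modulo
`2 ^ m - 1`. -/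
def bitSet (m d : ℕ) : Finset (Fin m) := {i | d.testBit i}

variable {m d : ℕ}

lemma sum_bitSet_two_pow (hd : d < 2 ^ m) : ∑ i ∈ bitSet m d, 2 ^ (i : ℕ) = d := by
  have hmap : (bitSet m d).map Fin.valEmbedding = d.bitIndices.toFinset := by
    ext i
    simp only [bitSet, mem_map, mem_filter, mem_univ, true_and, Fin.valEmbedding_apply,
      List.mem_toFinset, Nat.mem_bitIndices]
    refine ⟨?_, fun hi ↦ ⟨⟨i, ?_⟩, hi, rfl⟩⟩
    · rintro ⟨j, hj, rfl⟩
      exact hj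
    · exact (Nat.pow_lt_pow_iff_right one_lt_two).1 ((Nat.ge_two_pow_of_testBit hi).trans_lt hd)
  conv_rhs => rw [← sum_toFinset_bitIndices_two_pow d, ← hmap, sum_map]
  rfl

lemma pow_eq_prod_bitSet {M : Type*} [CommMonoid M] (hd : d < 2 ^ m) (x : M) :
    x ^ d = ∏ i ∈ bitSet m d, x ^ 2 ^ (i : ℕ) := by
  rw [prod_pow_eq_pow_sum, sum_bitSet_two_pow hd]

lemma bitSet_two_pow_sub_one_sub (hd : d < 2 ^ m) : bitSet m (2 ^ m - 1 - d) = (bitSet m d)ᶜ := by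
  ext i
  simp [bitSet, Nat.sub_sub, add_comm 1 d, Nat.testBit_two_pow_sub_succ hd]

lemma card_bitSet_le {k : ℕ} (hd : d < 2 ^ k) : #(bitSet m d) ≤ k := by
  calc #(bitSet m d) = #((bitSet m d).map Fin.valEmbedding) := (card_map _).symm
    _ ≤ #(range k) := card_le_card fun i hi ↦ ?_
    _ = k := card_range k
  simp only [bitSet, mem_map, mem_filter, mem_univ, true_and, Fin.valEmbedding_apply] at hi
  obtain ⟨j, hj, rfl⟩ := hi
  exact mem_range.2 <|
    (Nat.pow_lt_pow_iff_right one_lt_two).1 ((Nat.ge_two_pow_of_testBit hj).trans_lt hd)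

lemma lt_two_mul_card_bitSet_two_pow_sub_one_sub {k : ℕ} (hd : d < 2 ^ k) (hk : 2 * k < m) :
    m < 2 * #(bitSet m (2 ^ m - 1 - d)) := by
  have hdm : d < 2 ^ m := hd.trans_le (Nat.pow_le_pow_right two_pos (by omega))
  have hcard : #(bitSet m d) ≤ k := card_bitSet_le hd
  rw [bitSet_two_pow_sub_one_sub hdm, card_compl, Fintype.card_fin]
  omega

lemma two_pow_mod_modEq (m k : ℕ) : 2 ^ (k % m) ≡ 2 ^ k [MOD 2 ^ m - 1] := by
  have hone : 2 ^ m ≡ 1 [MOD 2 ^ m - 1] := Nat.modEq_sub Nat.one_le_two_pow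
  calc 2 ^ (k % m) = 1 ^ (k / m) * 2 ^ (k % m) := by rw [one_pow, one_mul]
    _ ≡ (2 ^ m) ^ (k / m) * 2 ^ (k % m) [MOD 2 ^ m - 1] := (hone.pow _).symm.mul_right _
    _ = 2 ^ k := by rw [← pow_mul, ← pow_add, Nat.div_add_mod]

lemma stabilizer_bitSet_eq_bot [NeZero m] (hd : d < 2 ^ m)
    (hcoset : ∀ i, 0 < i → i < m → ¬ 2 ^ i * d ≡ d [MOD 2 ^ m - 1]) :
    AddAction.stabilizer (Fin m) (bitSet m d) = ⊥ := by
  refine (AddSubgroup.eq_bot_iff_forall _).2 fun i hi ↦ by_contra fun hi0 ↦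
    hcoset i (Nat.pos_of_ne_zero (Fin.val_ne_zero_iff.2 hi0)) i.isLt ?_
  calc 2 ^ (i : ℕ) * d = ∑ t ∈ bitSet m d, 2 ^ ((i : ℕ) + t) := by
        simp_rw [pow_add, ← mul_sum, sum_bitSet_two_pow hd]
    _ ≡ ∑ t ∈ bitSet m d, 2 ^ ((i + t : Fin m) : ℕ) [MOD 2 ^ m - 1] :=
        Nat.ModEq.sum fun t _ ↦ by
          rw [Fin.val_add]
          exact (two_pow_mod_modEq m _).symm
    _ = ∑ t ∈ i +ᵥ bitSet m d, 2 ^ (t : ℕ) :=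
        Eq.symm <| sum_image fun _ _ _ _ h ↦ add_left_cancel h
    _ = d := by rw [AddAction.mem_stabilizer_iff.1 hi, sum_bitSet_two_pow hd]

lemma not_two_pow_mul_modEq_of_coprime (hd : d.Coprime (2 ^ m - 1)) {i : ℕ} (hi0 : 0 < i)
    (him : i < m) : ¬ 2 ^ i * d ≡ d [MOD 2 ^ m - 1] := by
  intro h
  have hone : 1 ≡ 2 ^ i [MOD 2 ^ m - 1] :=
    (Nat.ModEq.cancel_right_of_coprime hd.symm (by rwa [one_mul])).symm
  have hdvd := (Nat.modEq_iff_dvd' Nat.one_le_two_pow).1 hone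
  have hlt : 2 ^ i < 2 ^ m := Nat.pow_lt_pow_right one_lt_two him
  have hgt : 1 < 2 ^ i := Nat.one_lt_two_pow hi0.ne'
  have := Nat.le_of_dvd (by omega) hdvd
  omega

end BinaryDigits

section PowerMap

variable {F : Type*} [Field F] {m d : ℕ}

/-- The vector of conjugates of `x` under the powers of the Frobenius automorphism of a field with
`2 ^ m` elements: the points at which polarized polynomials recover functions of `x`. -/
def conjugates (m : ℕ) (x : F) : Fin m → F := fun i ↦ x ^ 2 ^ (i : ℕ)

lemma conjugates_zero : conjugates m (0 : F) = 0 :=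
  funext fun _ ↦ zero_pow (Nat.two_pow_pos _).ne'

lemma conjugates_ne_zero {x : F} (hx : x ≠ 0) (i : Fin m) : conjugates m x i ≠ 0 :=
  pow_ne_zero _ hx

lemma conjugates_add [CharP F 2] (x y : F) :
    conjugates m (x + y) = conjugates m x + conjugates m y :=
  funext fun _ ↦ add_pow_char_pow ..

lemma prod_bitSet_conjugates (hd : d < 2 ^ m) (x : F) :
    ∏ t ∈ bitSet m d, conjugates m x t = x ^ d :=
  (pow_eq_prod_bitSet hd x).symm

lemma eval_conjugates_shiftedMonomial [CharP F 2] (D : Finset (Fin m)) (x a : F) :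
    eval (conjugates m x) (shiftedMonomial D (conjugates m a)) =
      ∏ t ∈ D, conjugates m (x + a) t := by
  rw [eval_shiftedMonomial, conjugates_add]
  rfl

variable [Finite F]

lemma conjugates_pow_two_pow (hF : Nat.card F = 2 ^ m) (x : F) (i t : Fin m) :
    conjugates m x t ^ 2 ^ (i : ℕ) = conjugates m x (i + t) := by
  have := Fintype.ofFinite F
  rw [Nat.card_eq_fintype_card] at hF
  calc (x ^ 2 ^ (t : ℕ)) ^ 2 ^ (i : ℕ)
      = x ^ 2 ^ (m * ((i + t : ℕ) / m) + (i + t : ℕ) % m) := by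
        rw [← pow_mul, ← pow_add, Nat.div_add_mod, add_comm]
    _ = x ^ 2 ^ ((i + t : ℕ) % m) := by
        rw [pow_add, pow_mul, pow_mul, ← hF, FiniteField.pow_card_pow]
    _ = conjugates m x (i + t) := by rw [conjugates, Fin.val_add]

lemma prod_vadd_bitSet_conjugates (hF : Nat.card F = 2 ^ m) (hd : d < 2 ^ m) (x : F)
    (i : Fin m) : ∏ t ∈ i +ᵥ bitSet m d, conjugates m x t = (x ^ d) ^ 2 ^ (i : ℕ) := by
  calc ∏ t ∈ i +ᵥ bitSet m d, conjugates m x t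
      = ∏ t ∈ bitSet m d, conjugates m x (i + t) := prod_image fun _ _ _ _ h ↦ add_left_cancel h
    _ = (∏ t ∈ bitSet m d, conjugates m x t) ^ 2 ^ (i : ℕ) := by
        simp_rw [← conjugates_pow_two_pow hF, prod_pow]
    _ = (x ^ d) ^ 2 ^ (i : ℕ) := by rw [prod_bitSet_conjugates hd]

lemma exists_eval_conjugates_ne_zero (hF : Nat.card F = 2 ^ m) {P : MvPolynomial (Fin m) F}
    (hP : P ∈ restrictDegree (Fin m) F 1) {z : Fin m → F} (hz : eval z P ≠ 0) :
    ∃ x : F, eval (conjugates m x) P ≠ 0 :=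
  exists_eval_pow_ne_zero hF.ge hP fun h ↦ hz (by rw [h, map_zero])

theorem exists_pow_second_derivative_ne_zero [CharP F 2] (hF : Nat.card F = 2 ^ m)
    (hd : d < 2 ^ m) (hweight : 2 < #(bitSet m d)) {a b : F} (ha : a ≠ 0) (hb : b ≠ 0)
    (hab : a ≠ b) : ∃ x : F, x ^ d + (x + a) ^ d + (x + b) ^ d + (x + (a + b)) ^ d ≠ 0 := by
  let S (c : F) : MvPolynomial (Fin m) F := shiftedMonomial (bitSet m d) (conjugates m c)
  have hS (c : F) : S c ∈ restrictDegree (Fin m) F 1 := shiftedMonomial_mem_restrictDegree _ _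
  have hSx (x c : F) : eval (conjugates m x) (S c) = (x + c) ^ d := by
    rw [eval_conjugates_shiftedMonomial, prod_bitSet_conjugates hd]
  have hconj (t : Fin m) : conjugates m a t ≠ conjugates m b t := fun h ↦
    hab (iterateFrobenius_inj F 2 t h)
  obtain ⟨z, hz⟩ := exists_prod_second_derivative_ne_zero hweight
    (conjugates_ne_zero ha) (conjugates_ne_zero hb) hconj
  have hPz : eval z (S 0 + S a + S b + S (a + b)) ≠ 0 := by
    simpa [S, conjugates_zero, conjugates_add] using hz
  obtain ⟨x, hx⟩ := exists_eval_conjugates_ne_zero hF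
    (add_mem (add_mem (add_mem (hS 0) (hS a)) (hS b)) (hS (a + b))) hPz
  exact ⟨x, by simpa only [map_add, hSx, add_zero] using hx⟩

lemma natCard_eq_two_pow [Algebra (ZMod 2) F] (hfin : Module.finrank (ZMod 2) F = m) :
    Nat.card F = 2 ^ m := by
  rw [Module.natCard_eq_pow_finrank (K := ZMod 2), Nat.card_zmod, hfin]

lemma algebraMap_trace_eq_sum_fin_pow [Algebra (ZMod 2) F]
    (hfin : Module.finrank (ZMod 2) F = m) (x : F) :
    algebraMap (ZMod 2) F (Algebra.trace (ZMod 2) F x) = ∑ i : Fin m, x ^ 2 ^ (i : ℕ) := by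
  rw [FiniteField.algebraMap_trace_eq_sum_pow, hfin, Nat.card_zmod, sum_range]

theorem exists_trace_mul_pow_derivative_ne_zero [NeZero m] [Algebra (ZMod 2) F]
    (hfin : Module.finrank (ZMod 2) F = m) (hd : d < 2 ^ m) (hweight : m < 2 * #(bitSet m d))
    (hstab : AddAction.stabilizer (Fin m) (bitSet m d) = ⊥) {a b : F} (ha : a ≠ 0) (hb : b ≠ 0) :
    ∃ x : F, Algebra.trace (ZMod 2) F (b * (x ^ d + (x + a) ^ d)) ≠ 0 := by
  have : CharP F 2 := (Algebra.charP_iff (ZMod 2) F 2).1 inferInstance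
  have hF := natCard_eq_two_pow hfin
  let S (i : Fin m) (c : F) : MvPolynomial (Fin m) F :=
    shiftedMonomial (i +ᵥ bitSet m d) (conjugates m c)
  have hS (i : Fin m) (c : F) : S i c ∈ restrictDegree (Fin m) F 1 :=
    shiftedMonomial_mem_restrictDegree _ _
  have hSx (x : F) (i : Fin m) (c : F) :
      eval (conjugates m x) (S i c) = ((x + c) ^ d) ^ 2 ^ (i : ℕ) := by
    rw [eval_conjugates_shiftedMonomial, prod_vadd_bitSet_conjugates hF hd]
  obtain ⟨z, hz⟩ := exists_sum_prod_vadd_derivative_ne_zero (by rwa [Fintype.card_fin]) hstab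
    (conjugates_ne_zero hb 0) (conjugates_ne_zero ha)
  have hPz : eval z (∑ i, conjugates m b i • (S i 0 + S i a)) ≠ 0 := by
    simpa [S, conjugates_zero, smul_eval, mul_add] using hz
  obtain ⟨x, hx⟩ := exists_eval_conjugates_ne_zero hF
    (sum_mem fun i _ ↦ Submodule.smul_mem _ _ (add_mem (hS i 0) (hS i a))) hPz
  refine ⟨x, fun htrace ↦ hx ?_⟩
  calc eval (conjugates m x) (∑ i, conjugates m b i • (S i 0 + S i a))
      = ∑ i : Fin m, (b * (x ^ d + (x + a) ^ d)) ^ 2 ^ (i : ℕ) := by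
        simp only [map_sum, smul_eval, map_add, hSx, add_zero, mul_pow, add_pow_char_pow,
          conjugates]
    _ = 0 := by rw [← algebraMap_trace_eq_sum_fin_pow hfin, htrace, map_zero]

lemma inv_pow_eq_pow_two_pow_sub_one_sub (hF : Nat.card F = 2 ^ m) {e : ℕ} (he : e ≠ 0)
    (hem : e < 2 ^ m - 1) (x : F) : x⁻¹ ^ e = x ^ (2 ^ m - 1 - e) := by
  have := Fintype.ofFinite F
  rcases eq_or_ne x 0 with rfl | hx
  · rw [inv_zero, zero_pow he, zero_pow (Nat.sub_ne_zero_of_lt hem)]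
  · rw [pow_sub₀ x hx hem.le, ← hF, Nat.card_eq_fintype_card,
      FiniteField.pow_card_sub_one_eq_one x hx, one_mul, inv_pow]

end PowerMap

section MaioranaMcFarland

variable {V F : Type*} [AddCommGroup V] [Field F] [Algebra (ZMod 2) F]
  {π : V → F} {f : V × F → ZMod 2}

lemma D2_trace_mul (hf : ∀ x y, f (x, y) = Algebra.trace (ZMod 2) F (y * π x)) (u v : V × F)
    (x : V) (y : F) :
    D2 f u v (x, y) = Algebra.trace (ZMod 2) F
      (y * (π x + π (x + u.1) + π (x + v.1) + π (x + (u.1 + v.1))) +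
        u.2 * (π (x + u.1) + π (x + (u.1 + v.1))) +
        v.2 * (π (x + v.1) + π (x + (u.1 + v.1)))) := by
  rw [← Prod.mk.eta (p := u), ← Prod.mk.eta (p := v)]
  simp only [D2, Prod.mk_add_mk, hf, ← map_add, add_assoc]
  congr 1
  ring

lemma second_derivative_eq_zero_of_D2_eq_zero [Finite F]
    (hf : ∀ x y, f (x, y) = Algebra.trace (ZMod 2) F (y * π x)) {u v : V × F}
    (h : ∀ x, D2 f u v x = 0) (x : V) :
    π x + π (x + u.1) + π (x + v.1) + π (x + (u.1 + v.1)) = 0 := by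
  refine (traceForm_nondegenerate (ZMod 2) F).2 _ fun y ↦ ?_
  have hy := h (x, y)
  have h0 := h (x, 0)
  rw [D2_trace_mul hf, add_assoc, map_add] at hy h0
  rw [zero_mul, map_zero, zero_add] at h0
  rwa [h0, add_zero] at hy

lemma trace_mul_derivative_eq_zero_of_D2_eq_zero
    (hf : ∀ x y, f (x, y) = Algebra.trace (ZMod 2) F (y * π x)) {u v : V × F}
    (h : ∀ x, D2 f u v x = 0) (hv : v.1 = 0) (x : V) :
    Algebra.trace (ZMod 2) F (v.2 * (π x + π (x + u.1))) = 0 := by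
  have hx := h (x, 0)
  rw [D2_trace_mul hf] at hx
  simpa [hv, ZModModule.add_self] using hx

variable [Module (ZMod 2) V]

lemma isMSubspace_bot_prod_top (hf : ∀ x y, f (x, y) = Algebra.trace (ZMod 2) F (y * π x)) :
    IsMSubspace f ((⊥ : Submodule (ZMod 2) V).prod (⊤ : Submodule (ZMod 2) F)) := by
  rintro ⟨a, a'⟩ ⟨rfl : a = 0, -⟩ ⟨b, b'⟩ ⟨rfl : b = 0, -⟩ ⟨x, y⟩
  simp [D2_trace_mul hf, ZModModule.add_self]

lemma exists_mem_notMem_span_singleton {K M : Type*} [DivisionRing K] [AddCommGroup M]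
    [Module K M] {U : Submodule K M} (hU : 2 ≤ Module.finrank K U) (u : M) :
    ∃ v ∈ U, v ∉ K ∙ u := by
  by_contra! h
  have hle : Module.finrank K U ≤ 1 :=
    (Submodule.finrank_mono (show U ≤ K ∙ u from h)).trans (by simpa using finrank_span_le_card {u})
  omega

theorem IsMSubspace.le_bot_prod_top [Finite F]
    (hf : ∀ x y, f (x, y) = Algebra.trace (ZMod 2) F (y * π x))
    (hsecond : ∀ a b, a ≠ 0 → b ≠ 0 → a ≠ b →
      ∃ x, π x + π (x + a) + π (x + b) + π (x + (a + b)) ≠ 0)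
    (htrace : ∀ a b, a ≠ 0 → b ≠ 0 → ∃ x, Algebra.trace (ZMod 2) F (b * (π x + π (x + a))) ≠ 0)
    {U : Submodule (ZMod 2) (V × F)} (hU : IsMSubspace f U)
    (hdim : 2 ≤ Module.finrank (ZMod 2) U) :
    U ≤ (⊥ : Submodule (ZMod 2) V).prod (⊤ : Submodule (ZMod 2) F) := by
  refine fun u hu ↦ ⟨by_contra fun hu1 : u.1 ≠ 0 ↦ ?_, trivial⟩
  have hfst {w : V × F} (hw : w ∈ U) (hw1 : w.1 = 0) : w = 0 := by
    by_contra hw0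
    obtain ⟨x, hx⟩ := htrace u.1 w.2 hu1 fun h ↦ hw0 (Prod.ext hw1 h)
    exact hx (trace_mul_derivative_eq_zero_of_D2_eq_zero hf (hU u hu w hw) hw1 x)
  obtain ⟨v, hv, hvu⟩ := exists_mem_notMem_span_singleton hdim u
  have hv1 : v.1 ≠ 0 := fun h ↦ hvu (hfst hv h ▸ zero_mem _)
  have huv : u.1 ≠ v.1 := fun h ↦ hvu <| by
    rw [← sub_eq_zero.1 (hfst (U.sub_mem hu hv) (sub_eq_zero.2 h))]
    exact Submodule.mem_span_singleton_self u
  obtain ⟨x, hx⟩ := hsecond u.1 v.1 hu1 hv1 huv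
  exact hx (second_derivative_eq_zero_of_D2_eq_zero hf (hU u hu v hv) x)

end MaioranaMcFarland

lemma finrank_bot_prod_top {K V W : Type*} [DivisionRing K] [AddCommGroup V] [Module K V]
    [AddCommGroup W] [Module K W] :
    Module.finrank K ((⊥ : Submodule K V).prod (⊤ : Submodule K W)) = Module.finrank K W := by
  rw [← Submodule.map_inr, Submodule.map_top,
    LinearMap.finrank_range_of_inj LinearMap.inr_injective]

lemma lt_two_pow_div_four_of_le_rpow {m e : ℕ} (h : (4 * e : ℝ) ≤ 2 ^ ((m : ℝ) / 4) - 1) :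
    e < 2 ^ (m / 4) := by
  have hexp : (m : ℝ) / 4 < (m / 4 + 1 : ℕ) := by
    rw [div_lt_iff₀ four_pos]
    exact_mod_cast Nat.lt_mul_of_div_lt (Nat.lt_succ_self _) four_pos
  have hreal : (4 * e : ℝ) < (2 ^ (m / 4 + 1) : ℕ) := calc
    (4 * e : ℝ) < 2 ^ ((m : ℝ) / 4) := by linarith
    _ < 2 ^ ((m / 4 + 1 : ℕ) : ℝ) := Real.rpow_lt_rpow_of_exponent_lt one_lt_two hexp
    _ = (2 ^ (m / 4 + 1) : ℕ) := by rw [Real.rpow_natCast]; norm_cast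
  have hnat : 4 * e < 2 ^ (m / 4) * 2 := by exact_mod_cast hreal
  omega

theorem gPSap_monomial_unique_M_subspace_general {F : Type*} [Field F] [Finite F]
    [Algebra (ZMod 2) F] {m d : ℕ} (hm : 4 ≤ m) (hfin : Module.finrank (ZMod 2) F = m)
    (hd : d < 2 ^ m) (hweight : m < 2 * #(bitSet m d))
    (hcoset : ∀ i, 0 < i → i < m → ¬ 2 ^ i * d ≡ d [MOD 2 ^ m - 1])
    {f : F × F → ZMod 2} (hf : ∀ x y, f (x, y) = Algebra.trace (ZMod 2) F (y * x ^ d)) :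
    IsMSubspace f ((⊥ : Submodule (ZMod 2) F).prod (⊤ : Submodule (ZMod 2) F)) ∧
    (∀ U : Submodule (ZMod 2) (F × F), IsMSubspace f U → 2 ≤ Module.finrank (ZMod 2) U →
      U ≤ (⊥ : Submodule (ZMod 2) F).prod (⊤ : Submodule (ZMod 2) F)) ∧
    (∀ U : Submodule (ZMod 2) (F × F), IsMSubspace f U → Module.finrank (ZMod 2) U = m →
      U = (⊥ : Submodule (ZMod 2) F).prod (⊤ : Submodule (ZMod 2) F)) := by
  have : NeZero m := ⟨by omega⟩
  have : CharP F 2 := (Algebra.charP_iff (ZMod 2) F 2).1 inferInstance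
  have hF := natCard_eq_two_pow hfin
  have hstab := stabilizer_bitSet_eq_bot hd hcoset
  have hle (U : Submodule (ZMod 2) (F × F)) (hU : IsMSubspace f U)
      (hdim : 2 ≤ Module.finrank (ZMod 2) U) :
      U ≤ (⊥ : Submodule (ZMod 2) F).prod (⊤ : Submodule (ZMod 2) F) :=
    hU.le_bot_prod_top hf
      (fun _ _ ↦ exists_pow_second_derivative_ne_zero hF hd (by omega))
      (fun _ _ ↦ exists_trace_mul_pow_derivative_ne_zero hfin hd hweight hstab) hdim
  refine ⟨isMSubspace_bot_prod_top hf, hle, fun U hU hdim ↦ ?_⟩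
  exact Submodule.eq_of_le_of_finrank_eq (hle U hU (by omega))
    (by rw [hdim, finrank_bot_prod_top, hfin])

/-- Remark 4.8: for `f̃(x,y) = Tr(y x^{-e})` with `e` odd, `gcd(e, 2^m-1) = 1` and
`4e ≤ 2^{m/4} - 1`, every `M`-subspace of `f̃` of dimension at least `2` is contained in
`{0} × F_{2^m}`; in particular `{0} × F_{2^m}` is the unique `M`-subspace of dimension `m`. -/
theorem gPSap_monomial_unique_M_subspace
    (m : ℕ) (hm : 4 ≤ m) (e : ℕ) (he : 0 < e) (heodd : Odd e)
    (hgcd : Nat.gcd e (2 ^ m - 1) = 1)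
    (hbound : (4 * e : ℝ) ≤ 2 ^ ((m : ℝ) / 4) - 1)
    (f : GaloisField 2 m × GaloisField 2 m → ZMod 2)
    (hf : ∀ x y, f (x, y) = Tr m (y * (x⁻¹) ^ e)) :
    IsMSubspace f ((⊥ : Submodule (ZMod 2) (GaloisField 2 m)).prod
        (⊤ : Submodule (ZMod 2) (GaloisField 2 m))) ∧
    (∀ U : Submodule (ZMod 2) (GaloisField 2 m × GaloisField 2 m),
      IsMSubspace f U → 2 ≤ Module.finrank (ZMod 2) U →
      U ≤ (⊥ : Submodule (ZMod 2) (GaloisField 2 m)).prod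
            (⊤ : Submodule (ZMod 2) (GaloisField 2 m))) ∧
    (∀ U : Submodule (ZMod 2) (GaloisField 2 m × GaloisField 2 m),
      IsMSubspace f U → Module.finrank (ZMod 2) U = m →
      U = (⊥ : Submodule (ZMod 2) (GaloisField 2 m)).prod
            (⊤ : Submodule (ZMod 2) (GaloisField 2 m))) := by
  have hm0 : m ≠ 0 := by omega
  have he4 : e < 2 ^ (m / 4) := lt_two_pow_div_four_of_le_rpow hbound
  have hem : e < 2 ^ m - 1 := by
    have : 2 ^ (m / 4) < 2 ^ m := Nat.pow_lt_pow_right one_lt_two (by omega)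
    omega
  have hcop : (2 ^ m - 1 - e).Coprime (2 ^ m - 1) := (Nat.coprime_self_sub_left hem.le).2 hgcd
  refine gPSap_monomial_unique_M_subspace_general hm (GaloisField.finrank 2 hm0) (by omega)
    (lt_two_mul_card_bitSet_two_pow_sub_one_sub he4 (by omega))
    (fun _ ↦ not_two_pow_mul_modEq_of_coprime hcop) fun x y ↦ ?_
  rw [hf, inv_pow_eq_pow_two_pow_sub_one_sub (GaloisField.card 2 m hm0) he.ne' hem, Tr]
end

section
/- Let m ≥ 4 and let e be a positive integer with gcd(e, 2^m − 1) = 1. Let Q ∈ F_{2^m}[X] be a polynomial with Q(0) = 0, of odd degree t, whose evaluation map is a permutation of F_{2^m}, and assume 4·e·t ≤ 2^{m/4} − 1 (an inequality of real numbers). Assume moreover that for every λ ∈ F_{2^m} \ {0, 1}, the function g_λ : F_{2^m} → F_2 defined by g_λ(x) = Tr_1^m(Q((1+λ)·(x⁻¹)^e) + Q((x⁻¹)^e) + Q(λ·(x⁻¹)^e)) is not constant. Define f̃ : F_{2^m} × F_{2^m} → F_2 by f̃(x,y) = Tr_1^m(Q(y · (x⁻¹)^e)). Then for every pair of linearly independent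 vectors u, v ∈ F_{2^m} × F_{2^m}, the second-order derivative D_u D_v f̃ is not constant on F_{2^m} × F_{2^m}. -/
/-!
Write `K` for the finite field. A polynomial `P` over `K` of degree below `p ^ k`, with `2 * k` at
most the dimension of `K` over `F_p`, has constant trace `y ↦ Tr (P y)` only if `P` is trivial
modulo the relation `Tr (c ^ p) = Tr c`: once the coefficients in degrees `s, p * s, p ^ 2 * s, …`
are merged along this relation, the result vanishes for every `s` prime to `p`.

If a sum of translates of `(x, y) ↦ Tr (Q (y * x⁻¹ ^ e))` is constant, then for each fixed `x` its
merged coefficients as a polynomial in `y` vanish. As functions of `x` they are sums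
`∑ a, A a ((x - a)⁻¹)` with polynomials `A a` of small degree, one for each first coordinate `a` of
the translations. Poles at distinct points cannot cancel, so every `A a` is constant, and being zero
at the origin it vanishes. Hence for every scalar `z` the translations with one fixed first
coordinate already give a function `y ↦ ∑ Tr (Q (z * (y - b)))` that is constant.

A second derivative in directions `u`, `v` is the sum over the translations `0, u, v, u + v`. Those
with first coordinate `0` are `0` alone, which contradicts the odd degree of `Q`; or a pair `0`,
`(0, d)`, which makes some `g_λ` constant; or all four, and then `g_λ` is visible directly, because
`x ↦ x⁻¹ ^ e` is surjective.
-/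

open Polynomial

lemma mul_pow_lt_pow_sub_one {p k r m d : ℕ} (hp : 1 < p) (hr : r ≠ 0) (hd : d < p ^ k)
    (hm : k + r ≤ m) : d * p ^ r < p ^ m - 1 := by
  have hpr : 1 < p ^ r := Nat.one_lt_pow hr hp
  have hle : (d + 1) * p ^ r ≤ p ^ m :=
    calc (d + 1) * p ^ r ≤ p ^ k * p ^ r := Nat.mul_le_mul_right _ hd
      _ = p ^ (k + r) := (pow_add p k r).symm
      _ ≤ p ^ m := Nat.pow_le_pow_right hp.le hm
  rw [add_one_mul] at hle
  omega

lemma lt_pow_sub_one_of_not_dvd {p k m d : ℕ} (hp : 1 < p) (hd : ¬ p ∣ d) (hdk : d < p ^ k)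
    (hkm : 2 * k ≤ m) : d < p ^ m - 1 := by
  have hk : k ≠ 0 := by
    rintro rfl
    exact hd (by simp_all)
  calc d ≤ d * p ^ k := Nat.le_mul_of_pos_right d (by positivity)
    _ < p ^ m - 1 := mul_pow_lt_pow_sub_one hp hk hdk (by omega)

lemma eq_zero_and_eq_of_mul_pow_modEq {p k m d i j : ℕ} (hp : 1 < p) (hd : ¬ p ∣ d)
    (hdk : d < p ^ k) (hkm : 2 * k ≤ m) (hi : i < m) (hj : j ≤ d)
    (h : j * p ^ i ≡ d [MOD p ^ m - 1]) : i = 0 ∧ j = d := by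
  have hd_lt : d < p ^ m - 1 := lt_pow_sub_one_of_not_dvd hp hd hdk hkm
  rcases eq_or_ne i 0 with rfl | hi0
  · rw [pow_zero, mul_one] at h
    exact ⟨rfl, h.eq_of_lt_of_lt (hj.trans_lt hd_lt) hd_lt⟩
  exfalso
  by_cases hik : k + i ≤ m
  · have hjd : j * p ^ i = d :=
      h.eq_of_lt_of_lt (mul_pow_lt_pow_sub_one hp hi0 (hj.trans_lt hdk) hik) hd_lt
    exact hd (hjd ▸ (dvd_pow_self p hi0).mul_left j)
  · have hpm : p ^ m ≡ 1 [MOD p ^ m - 1] := Nat.modEq_sub (Nat.one_le_pow _ _ (by omega))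
    have hdj : j ≡ d * p ^ (m - i) [MOD p ^ m - 1] :=
      calc j ≡ j * p ^ m [MOD p ^ m - 1] := by simpa using (hpm.mul_left j).symm
        _ = j * p ^ i * p ^ (m - i) := by rw [mul_assoc, ← pow_add, Nat.add_sub_cancel' hi.le]
        _ ≡ d * p ^ (m - i) [MOD p ^ m - 1] := h.mul_right _
    have hjd : j = d * p ^ (m - i) :=
      hdj.eq_of_lt_of_lt (hj.trans_lt hd_lt)
        (mul_pow_lt_pow_sub_one hp (by omega) hdk (by omega))
    have hlt : d * 1 < d * p ^ (m - i) :=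
      Nat.mul_lt_mul_of_pos_left (Nat.one_lt_pow (by omega) hp)
        (Nat.pos_of_ne_zero fun h0 ↦ hd (h0 ▸ dvd_zero p))
    omega

lemma pow_sub_one_dvd_mul_pow_add_iff {p k m d i j : ℕ} (hp : 1 < p) (hd : ¬ p ∣ d)
    (hdk : d < p ^ k) (hkm : 2 * k ≤ m) (hi : i < m) (hj : j ≤ d) :
    p ^ m - 1 ∣ j * p ^ i + (p ^ m - 1 - d) ↔ i = 0 ∧ j = d := by
  have hd_lt : d < p ^ m - 1 := lt_pow_sub_one_of_not_dvd hp hd hdk hkm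
  constructor
  · intro hdvd
    refine eq_zero_and_eq_of_mul_pow_modEq hp hd hdk hkm hi hj
      (Nat.ModEq.add_right_cancel' (p ^ m - 1 - d) ?_)
    rw [Nat.add_sub_cancel' hd_lt.le]
    exact (Nat.modEq_zero_iff_dvd.2 hdvd).trans (Nat.modEq_zero_iff_dvd.2 dvd_rfl).symm
  · rintro ⟨rfl, rfl⟩
    rw [pow_zero, mul_one, Nat.add_sub_cancel' hd_lt.le]

lemma sum_Ico_one_pow_eq_sum_not_dvd {M : Type*} [AddCommMonoid M] {p : ℕ} (hp : p.Prime) (k : ℕ)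
    {g : ℕ → M} (hg : ∀ j, p ^ k ≤ j → g j = 0) :
    ∑ j ∈ Finset.Ico 1 (p ^ k), g j =
      ∑ s ∈ Finset.range (p ^ k) with ¬ p ∣ s, ∑ i ∈ Finset.range k, g (p ^ i * s) := by
  rw [← Finset.sum_product']
  symm
  refine Finset.sum_bij_ne_zero (fun x _ _ ↦ p ^ x.2 * x.1) ?_ ?_ ?_ fun _ _ _ ↦ rfl
  · rintro ⟨s, i⟩ hsi hne
    simp only [Finset.mem_product, Finset.mem_filter] at hsi
    have hs : s ≠ 0 := by rintro rfl; exact hsi.1.2 (dvd_zero p)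
    exact Finset.mem_Ico.2 ⟨Nat.mul_pos (pow_pos hp.pos i) (Nat.pos_of_ne_zero hs),
      not_le.1 fun hle ↦ hne (hg _ hle)⟩
  · rintro ⟨s, i⟩ hsi - ⟨s', i'⟩ hsi' - heq
    simp only [Finset.mem_product, Finset.mem_filter] at hsi hsi' heq
    obtain rfl : s = s' := by
      rw [← Nat.ordCompl_pow_mul_of_not_dvd i hp hsi.1.2, heq,
        Nat.ordCompl_pow_mul_of_not_dvd i' hp hsi'.1.2]
    have hs : s ≠ 0 := by rintro rfl; exact hsi.1.2 (dvd_zero p)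
    obtain rfl : i = i' :=
      Nat.pow_right_injective hp.two_le (Nat.eq_of_mul_eq_mul_right (Nat.pos_of_ne_zero hs) heq)
    rfl
  · intro j hj hne
    obtain ⟨hj1, hjk⟩ := Finset.mem_Ico.1 hj
    obtain ⟨i, s, hs, rfl⟩ := Nat.exists_eq_pow_mul_and_not_dvd (n := j) (by omega) p hp.ne_one
    have hs_lt : s < p ^ k := (Nat.le_mul_of_pos_left s (pow_pos hp.pos i)).trans_lt hjk
    have hi_lt : i < k := (Nat.pow_lt_pow_iff_right hp.one_lt).1
      ((Nat.le_mul_of_pos_right _ (Nat.pos_of_mul_pos_left hj1)).trans_lt hjk)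
    exact ⟨(s, i), by simp [hs, hs_lt, hi_lt], hne, rfl⟩

section Trace

variable {p : ℕ} [Fact p.Prime] {K : Type*} [Field K] [Algebra (ZMod p) K]

lemma trace_pow_char_pow [Finite K] (x : K) (n : ℕ) :
    Algebra.trace (ZMod p) K (x ^ p ^ n) = Algebra.trace (ZMod p) K x := by
  have hx := congrFun (FiniteField.coe_frobeniusAlgEquivOfAlgebraic_iterate (ZMod p) K n) x
  rw [ZMod.card, ← AlgEquiv.coe_pow] at hx
  rw [← hx, Algebra.trace_eq_of_algEquiv]

lemma sum_units_pow_mul_trace_eval [Fintype K] [DecidableEq K] (P : K[X]) (r : ℕ) :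
    ∑ x : Kˣ, (x : K) ^ r * algebraMap (ZMod p) K (Algebra.trace (ZMod p) K (P.eval (x : K))) =
      -∑ i ∈ Finset.range (Module.finrank (ZMod p) K), ∑ j ∈ Finset.range (P.natDegree + 1),
        if Fintype.card K - 1 ∣ j * p ^ i + r then P.coeff j ^ p ^ i else 0 := by
  have : CharP K p := charP_of_injective_algebraMap' (ZMod p) p
  have expand_trace (x : K) :
      x ^ r * algebraMap (ZMod p) K (Algebra.trace (ZMod p) K (P.eval x)) =
        ∑ i ∈ Finset.range (Module.finrank (ZMod p) K), ∑ j ∈ Finset.range (P.natDegree + 1),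
          P.coeff j ^ p ^ i * x ^ (j * p ^ i + r) := by
    rw [FiniteField.algebraMap_trace_eq_sum_pow, Nat.card_zmod, Finset.mul_sum]
    refine Finset.sum_congr rfl fun i _ ↦ ?_
    rw [eval_eq_sum_range, sum_pow_char_pow, Finset.mul_sum]
    exact Finset.sum_congr rfl fun j _ ↦ by ring
  simp_rw [expand_trace, ← Finset.sum_neg_distrib]
  rw [Finset.sum_comm]
  refine Finset.sum_congr rfl fun i _ ↦ ?_
  rw [Finset.sum_comm]
  refine Finset.sum_congr rfl fun j _ ↦ ?_
  rw [← Finset.mul_sum, FiniteField.sum_pow_units, mul_ite, mul_neg_one, mul_zero,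
    apply_ite Neg.neg, neg_zero]

theorem dvd_natDegree_of_trace_eval_eq [Finite K] {k : ℕ} (hkm : 2 * k ≤ Module.finrank (ZMod p) K)
    {P : K[X]} (hP : P.natDegree < p ^ k) {c : ZMod p}
    (h : ∀ y, Algebra.trace (ZMod p) K (P.eval y) = c) : p ∣ P.natDegree := by
  classical
  have := Fintype.ofFinite K
  have hp : 1 < p := (Fact.out : p.Prime).one_lt
  by_contra hd
  set d := P.natDegree with hd_def
  set m := Module.finrank (ZMod p) K with hm_def
  have hcard : Fintype.card K = p ^ m := by
    rw [Module.card_eq_pow_finrank (K := ZMod p), ZMod.card]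
  have hd_lt : d < p ^ m - 1 := lt_pow_sub_one_of_not_dvd hp hd hP hkm
  have hd0 : d ≠ 0 := fun h0 ↦ hd (h0 ▸ dvd_zero p)
  have hm0 : 0 < m := Module.finrank_pos
  have moment_eq_zero : ∑ x : Kˣ, (x : K) ^ (p ^ m - 1 - d) *
      algebraMap (ZMod p) K (Algebra.trace (ZMod p) K (P.eval (x : K))) = 0 := by
    simp_rw [h, ← Finset.sum_mul, FiniteField.sum_pow_units, hcard]
    rw [if_neg (Nat.not_dvd_of_pos_of_lt (by omega) (by omega)), zero_mul]
  have moment_eq_leadingCoeff : ∑ x : Kˣ, (x : K) ^ (p ^ m - 1 - d) *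
      algebraMap (ZMod p) K (Algebra.trace (ZMod p) K (P.eval (x : K))) = -P.leadingCoeff := by
    rw [sum_units_pow_mul_trace_eval, hcard, ← hd_def, ← hm_def, neg_inj]
    calc _ = ∑ i ∈ Finset.range m, ∑ j ∈ Finset.range (d + 1),
          if i = 0 ∧ j = d then P.coeff j ^ p ^ i else 0 :=
        Finset.sum_congr rfl fun i hi ↦ Finset.sum_congr rfl fun j hj ↦
          if_congr (pow_sub_one_dvd_mul_pow_add_iff hp hd hP hkm (Finset.mem_range.1 hi)
            (Finset.mem_range_succ_iff.1 hj)) rfl rfl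
      _ = P.leadingCoeff := by simp [ite_and, hm0, d]
  have hP0 : P = 0 := by
    rw [← leadingCoeff_eq_zero, ← neg_eq_zero, ← moment_eq_leadingCoeff, moment_eq_zero]
  exact hd0 (by rw [hd_def, hP0, natDegree_zero])

end Trace

section ReducedCoeff

/-- The coefficient at `s` of the Artin–Schreier reduction of `P`: since `Tr (c * y ^ (p ^ i * s))`
equals `Tr (c ^ p ^ (k - i) * (y ^ p ^ k) ^ s)`, the terms of `P` of degree `s, p * s, p ^ 2 * s, …`
contribute to the trace of `P` as one term of degree `s` in `y ^ p ^ k`. The common twist by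
`p ^ k` avoids `p`-th roots of coefficients, so that `R` may be a polynomial ring. -/
noncomputable def reducedCoeff {R : Type*} [Semiring R] (p k s : ℕ) (P : R[X]) : R :=
  ∑ i ∈ Finset.range k, P.coeff (p ^ i * s) ^ p ^ (k - i)

lemma reducedCoeff_sum {R ι : Type*} [CommSemiring R] (p k s : ℕ) [ExpChar R p] (T : Finset ι)
    (P : ι → R[X]) : reducedCoeff p k s (∑ t ∈ T, P t) = ∑ t ∈ T, reducedCoeff p k s (P t) := by
  simp only [reducedCoeff, finsetSum_coeff, sum_pow_char_pow]
  exact Finset.sum_comm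

lemma reducedCoeff_map {R S : Type*} [Semiring R] [Semiring S] (φ : R →+* S)
    (p k s : ℕ) (P : R[X]) : reducedCoeff p k s (P.map φ) = φ (reducedCoeff p k s P) := by
  simp only [reducedCoeff, coeff_map, map_sum, map_pow]

lemma reducedCoeff_C {R : Type*} [Semiring R] {p s : ℕ} (hp : p ≠ 0) (hs : s ≠ 0)
    (k : ℕ) (r : R) : reducedCoeff p k s (C r) = 0 := by
  refine Finset.sum_eq_zero fun i _ ↦ ?_
  rw [coeff_C_of_ne_zero (by positivity), zero_pow (by positivity)]

lemma natDegree_reducedCoeff_le {R : Type*} [Semiring R] {p : ℕ} (hp : p ≠ 0) (k s : ℕ)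
    {N : ℕ} {G : R[X][X]} (hG : ∀ j, (G.coeff j).natDegree ≤ N) :
    (reducedCoeff p k s G).natDegree ≤ p ^ k * N := by
  refine natDegree_sum_le_of_forall_le _ _ fun i _ ↦ natDegree_pow_le.trans ?_
  exact Nat.mul_le_mul (Nat.pow_le_pow_right (Nat.pos_of_ne_zero hp) (k.sub_le i)) (hG _)

variable {p : ℕ} [Fact p.Prime] {K : Type*} [Field K] [Finite K] [Algebra (ZMod p) K]

lemma trace_eval_eq_add_trace_sum_reducedCoeff {k : ℕ} {P : K[X]} (hP : P.natDegree < p ^ k)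
    (y : K) : Algebra.trace (ZMod p) K (P.eval y) =
      Algebra.trace (ZMod p) K (P.coeff 0) + Algebra.trace (ZMod p) K
        (∑ s ∈ Finset.range (p ^ k) with ¬ p ∣ s, reducedCoeff p k s P * (y ^ p ^ k) ^ s) := by
  have hp : p.Prime := Fact.out
  have trace_term (s i : ℕ) (hi : i ∈ Finset.range k) :
      Algebra.trace (ZMod p) K (P.coeff (p ^ i * s) * y ^ (p ^ i * s)) =
        Algebra.trace (ZMod p) K (P.coeff (p ^ i * s) ^ p ^ (k - i) * (y ^ p ^ k) ^ s) := by
    rw [← trace_pow_char_pow _ (k - i), mul_pow, ← pow_mul, ← pow_mul, mul_right_comm, ← pow_add,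
      Nat.add_sub_cancel' (Finset.mem_range.1 hi).le]
  have eval_split : P.eval y = P.coeff 0 + ∑ j ∈ Finset.Ico 1 (p ^ k), P.coeff j * y ^ j := by
    rw [eval_eq_sum_range' hP, Finset.range_eq_Ico,
      Finset.sum_eq_sum_Ico_succ_bot (pow_pos hp.pos k), pow_zero, mul_one]
  rw [eval_split, map_add, map_sum, sum_Ico_one_pow_eq_sum_not_dvd hp k fun j hj ↦ by
      rw [coeff_eq_zero_of_natDegree_lt (hP.trans_le hj), zero_mul, map_zero], map_sum]
  congr 1
  refine Finset.sum_congr rfl fun s _ ↦ ?_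
  rw [reducedCoeff, Finset.sum_mul, map_sum]
  exact Finset.sum_congr rfl (trace_term s)

theorem reducedCoeff_eq_zero_of_trace_eval_eq {k : ℕ} (hkm : 2 * k ≤ Module.finrank (ZMod p) K)
    {P : K[X]} (hP : P.natDegree < p ^ k) {c : ZMod p}
    (h : ∀ y, Algebra.trace (ZMod p) K (P.eval y) = c) {s : ℕ} (hs : ¬ p ∣ s) :
    reducedCoeff p k s P = 0 := by
  have hp : p.Prime := Fact.out
  have : CharP K p := charP_of_injective_algebraMap' (ZMod p) p
  set I : Finset ℕ := {s ∈ Finset.range (p ^ k) | ¬ p ∣ s}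
  set R : K[X] := ∑ s ∈ I, C (reducedCoeff p k s P) * X ^ s with hR
  have coeff_R (j : ℕ) : R.coeff j = if j ∈ I then reducedCoeff p k j P else 0 := by
    simp [hR, finsetSum_coeff, coeff_X_pow]
  have natDegree_mem (hR0 : R ≠ 0) : R.natDegree ∈ I := by
    by_contra hmem
    exact hR0 (leadingCoeff_eq_zero.1 ((coeff_R _).trans (if_neg hmem)))
  have trace_R (y : K) :
      Algebra.trace (ZMod p) K (R.eval y) = c - Algebra.trace (ZMod p) K (P.coeff 0) := by
    obtain ⟨w, rfl⟩ := (bijective_iterateFrobenius K p k).surjective y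
    rw [← h w, trace_eval_eq_add_trace_sum_reducedCoeff hP, add_sub_cancel_left, hR]
    simp [eval_finsetSum, iterateFrobenius_def, I]
  have R_eq_zero : R = 0 := by
    by_contra hR0
    obtain ⟨hlt, hdvd⟩ := Finset.mem_filter.1 (natDegree_mem hR0)
    exact hdvd (dvd_natDegree_of_trace_eval_eq hkm (Finset.mem_range.1 hlt) trace_R)
  rcases lt_or_ge s (p ^ k) with hsk | hsk
  · have hsI : s ∈ I := Finset.mem_filter.2 ⟨Finset.mem_range.2 hsk, hs⟩
    rw [← if_pos (c := s ∈ I) (t := reducedCoeff p k s P) hsI, ← coeff_R, R_eq_zero, coeff_zero]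
  · refine Finset.sum_eq_zero fun i _ ↦ ?_
    have hlt : P.natDegree < p ^ i * s :=
      (hP.trans_le hsk).trans_le (Nat.le_mul_of_pos_left s (pow_pos hp.pos i))
    rw [coeff_eq_zero_of_natDegree_lt hlt, zero_pow (pow_pos hp.pos _).ne']

lemma trace_eval_eq_of_reducedCoeff_eq_zero {k : ℕ} {P : K[X]} (hP : P.natDegree < p ^ k)
    (h : ∀ s, ¬ p ∣ s → reducedCoeff p k s P = 0) (y : K) :
    Algebra.trace (ZMod p) K (P.eval y) = Algebra.trace (ZMod p) K (P.coeff 0) := by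
  rw [trace_eval_eq_add_trace_sum_reducedCoeff hP, Finset.sum_eq_zero, map_zero, add_zero]
  intro s hs
  rw [h s (Finset.mem_filter.1 hs).2, zero_mul]

end ReducedCoeff

section PartialFractions

variable {K : Type*} [Field K]

lemma eval_reflect {N : ℕ} {A : K[X]} (hA : A.natDegree ≤ N) {w : K} (hw : w ≠ 0) :
    (A.reflect N).eval w = w ^ N * A.eval w⁻¹ := by
  have : Invertible w⁻¹ := invertibleOfNonzero (inv_ne_zero hw)
  have h : (A.reflect N).eval (⅟w⁻¹) * w⁻¹ ^ N = A.eval w⁻¹ :=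
    eval₂_reflect_mul_pow (RingHom.id K) w⁻¹ N A hA
  rw [invOf_eq_inv, inv_inv, inv_pow] at h
  rw [← h, mul_left_comm, mul_inv_cancel₀ (pow_ne_zero N hw), mul_one]

/-- The numerator of `∑ a ∈ S, A a (1 / (X - a))` over the denominator `∏ a ∈ S, (X - a) ^ N`,
for polynomials `A a` of degree at most `N`. -/
noncomputable def poleNumerator [DecidableEq K] (S : Finset K) (N : ℕ) (A : K → K[X]) : K[X] :=
  ∑ a ∈ S, ((A a).reflect N).comp (X - C a) * ∏ b ∈ S.erase a, (X - C b) ^ N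

variable {S : Finset K} {N : ℕ} {A : K → K[X]}

lemma natDegree_poleNumerator_le [DecidableEq K] (hA : ∀ a ∈ S, (A a).natDegree ≤ N) :
    (poleNumerator S N A).natDegree ≤ S.card * N := by
  refine natDegree_sum_le_of_forall_le _ _ fun a ha ↦ natDegree_mul_le.trans ?_
  have hcomp : (((A a).reflect N).comp (X - C a)).natDegree ≤ N := by
    rw [natDegree_comp, natDegree_X_sub_C, mul_one]
    exact natDegree_reflect_le.trans (max_le le_rfl (hA a ha))
  have hprod : (∏ b ∈ S.erase a, (X - C b) ^ N).natDegree = (S.erase a).card * N := by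
    rw [natDegree_prod_of_monic _ _ fun b _ ↦ (monic_X_sub_C b).pow N]
    simp
  calc _ ≤ N + (S.erase a).card * N := add_le_add hcomp hprod.le
    _ = S.card * N := by rw [← Finset.card_erase_add_one ha, add_one_mul, add_comm]

lemma eval_poleNumerator_of_notMem [DecidableEq K] (hA : ∀ a ∈ S, (A a).natDegree ≤ N)
    {x : K} (hx : x ∉ S) :
    (poleNumerator S N A).eval x =
      (∏ a ∈ S, (x - a) ^ N) * ∑ a ∈ S, (A a).eval (x - a)⁻¹ := by
  rw [poleNumerator, eval_finsetSum, Finset.mul_sum]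
  refine Finset.sum_congr rfl fun a ha ↦ ?_
  have hxa : x - a ≠ 0 := sub_ne_zero.2 fun h ↦ hx (h ▸ ha)
  rw [← Finset.mul_prod_erase S _ ha, eval_mul, eval_comp, eval_prod]
  simp only [eval_sub, eval_X, eval_C, eval_pow]
  rw [eval_reflect (hA a ha) hxa]
  ring

lemma eval_poleNumerator_of_mem [DecidableEq K] (hN : N ≠ 0) {a : K} (ha : a ∈ S) :
    (poleNumerator S N A).eval a = (A a).coeff N * ∏ b ∈ S.erase a, (a - b) ^ N := by
  rw [poleNumerator, eval_finsetSum, Finset.sum_eq_single_of_mem a ha]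
  · simp [eval_comp, eval_prod, ← coeff_zero_eq_eval_zero, coeff_reflect]
  · intro b _ hba
    rw [eval_mul, eval_prod, Finset.prod_eq_zero (Finset.mem_erase.2 ⟨hba.symm, ha⟩), mul_zero]
    simp [hN]

theorem natDegree_eq_zero_of_sum_eval_inv_sub_eq_zero {T : Finset K} (hST : Disjoint S T)
    (hcard : S.card * N < T.card) (hA : ∀ a ∈ S, (A a).natDegree ≤ N)
    (h : ∀ x ∈ T, ∑ a ∈ S, (A a).eval (x - a)⁻¹ = 0) : ∀ a ∈ S, (A a).natDegree = 0 := by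
  classical
  induction N with
  | zero => exact fun a ha ↦ Nat.le_zero.1 (hA a ha)
  | succ N ih =>
    have numerator_eq_zero : poleNumerator S (N + 1) A = 0 :=
      eq_zero_of_natDegree_lt_card_of_eval_eq_zero' _ T
        (fun x hx ↦ by
          rw [eval_poleNumerator_of_notMem hA (Finset.disjoint_right.1 hST hx), h x hx, mul_zero])
        ((natDegree_poleNumerator_le hA).trans_lt hcard)
    have coeff_eq_zero (a : K) (ha : a ∈ S) : (A a).coeff (N + 1) = 0 := by
      have hprod : ∏ b ∈ S.erase a, (a - b) ^ (N + 1) ≠ 0 := Finset.prod_ne_zero_iff.2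
        fun b hb ↦ pow_ne_zero _ (sub_ne_zero.2 (Finset.ne_of_mem_erase hb).symm)
      have heval := eval_poleNumerator_of_mem (A := A) N.succ_ne_zero ha
      rw [numerator_eq_zero, eval_zero] at heval
      exact (mul_eq_zero.1 heval.symm).resolve_right hprod
    exact ih ((Nat.mul_le_mul_left _ N.le_succ).trans_lt hcard)
      fun a ha ↦ natDegree_le_pred (hA a ha) (coeff_eq_zero a ha)

end PartialFractions

lemma natDegree_sum_lt_of_forall_lt {R ι : Type*} [Semiring R] {T : Finset ι} {P : ι → R[X]} {n : ℕ}
    (hn : 0 < n) (h : ∀ t ∈ T, (P t).natDegree < n) : (∑ t ∈ T, P t).natDegree < n :=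
  Nat.lt_of_le_pred hn <|
    natDegree_sum_le_of_forall_le _ _ fun t ht ↦ Nat.le_pred_of_lt (h t ht)

section Bivariate

variable {R : Type*} [CommRing R]

/-- The bivariate polynomial `Q (x * (y - b))`, with `y` the outer variable over `R[x]`. It carries
the dependence on both coordinates of one translate of the function studied here: the inner
variable stands for the power of the inverse of the first coordinate. -/
noncomputable def dilatedTranslate (Q : R[X]) (b : R) : R[X][X] :=
  taylor (C (-b)) ((Q.map C).comp (C X * X))

lemma map_evalRingHom_dilatedTranslate (Q : R[X]) (b z : R) :
    (dilatedTranslate Q b).map (evalRingHom z) = taylor (-b) (Q.comp (C z * X)) := by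
  have hC : (evalRingHom z).comp C = RingHom.id R := RingHom.ext fun a ↦ eval_C
  simp [dilatedTranslate, map_taylor, Polynomial.map_comp, Polynomial.map_map, hC]

lemma evalEval_dilatedTranslate (Q : R[X]) (b z y : R) :
    (dilatedTranslate Q b).evalEval z y = Q.eval (z * (y - b)) := by
  rw [← map_evalRingHom_eval, map_evalRingHom_dilatedTranslate, taylor_eval, eval_comp,
    eval_C_mul, eval_X, sub_eq_add_neg]

lemma natDegree_dilatedTranslate_le (Q : R[X]) (b : R) :
    (dilatedTranslate Q b).natDegree ≤ Q.natDegree := by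
  rw [dilatedTranslate, natDegree_taylor]
  calc ((Q.map C).comp (C X * X)).natDegree ≤ (Q.map C).natDegree * (C X * X).natDegree :=
        natDegree_comp_le
    _ ≤ Q.natDegree * 1 :=
        Nat.mul_le_mul natDegree_map_le ((natDegree_C_mul_le _ _).trans natDegree_X_le)
    _ = Q.natDegree := mul_one _

lemma natDegree_coeff_dilatedTranslate_le (Q : R[X]) (b : R) (j : ℕ) :
    ((dilatedTranslate Q b).coeff j).natDegree ≤ Q.natDegree := by
  have coeff_comp_le (n : ℕ) : (((Q.map C).comp (C X * X)).coeff n).natDegree ≤ Q.natDegree := by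
    rw [comp_C_mul_X_coeff, coeff_map]
    rcases le_or_gt n Q.natDegree with hn | hn
    · exact (natDegree_C_mul_X_pow_le _ n).trans hn
    · simp [coeff_eq_zero_of_natDegree_lt hn]
  rw [dilatedTranslate, taylor_coeff, eval_eq_sum_range]
  refine natDegree_sum_le_of_forall_le _ _ fun n _ ↦ ?_
  rw [hasseDeriv_coeff, ← C_pow, ← C_eq_natCast, mul_comm (C _), mul_assoc, ← C_mul]
  exact (natDegree_mul_C_le _ _).trans (coeff_comp_le _)

end Bivariate

section PoleSeparation

variable {p : ℕ} [Fact p.Prime] {K : Type*} [Field K] [Finite K] [Algebra (ZMod p) K]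
  {k e N : ℕ} {S : Finset K} {G : K → K[X][X]} {c : ZMod p}

lemma sum_eval_reducedCoeff_eq_zero_of_sum_trace_evalEval_eq
    (hkm : 2 * k ≤ Module.finrank (ZMod p) K) (hG : ∀ a ∈ S, (G a).natDegree < p ^ k) {z : K → K}
    (h : ∀ y, ∑ a ∈ S, Algebra.trace (ZMod p) K ((G a).evalEval (z a) y) = c)
    {s : ℕ} (hs : ¬ p ∣ s) : ∑ a ∈ S, (reducedCoeff p k s (G a)).eval (z a) = 0 := by
  have : CharP K p := charP_of_injective_algebraMap' (ZMod p) p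
  have hdeg : (∑ a ∈ S, (G a).map (evalRingHom (z a))).natDegree < p ^ k :=
    natDegree_sum_lt_of_forall_lt (pow_pos (Fact.out : p.Prime).pos k) fun a ha ↦
      natDegree_map_le.trans_lt (hG a ha)
  have hzero := reducedCoeff_eq_zero_of_trace_eval_eq hkm hdeg (c := c) (fun y ↦ by
    rw [eval_finsetSum, map_sum, ← h y]
    simp only [map_evalRingHom_eval]) hs
  rw [reducedCoeff_sum] at hzero
  simpa only [reducedCoeff_map, coe_evalRingHom] using hzero

theorem natDegree_reducedCoeff_eq_zero_of_sum_trace_evalEval_eq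
    (hkm : 2 * k ≤ Module.finrank (ZMod p) K) (he : e ≠ 0)
    (hcard : S.card * (e * (p ^ k * N) + 1) < Nat.card K)
    (hG : ∀ a ∈ S, (G a).natDegree < p ^ k) (hGN : ∀ a ∈ S, ∀ j, ((G a).coeff j).natDegree ≤ N)
    (h : ∀ x ∉ S, ∀ y, ∑ a ∈ S,
      Algebra.trace (ZMod p) K ((G a).evalEval ((x - a)⁻¹ ^ e) y) = c)
    {s : ℕ} (hs : ¬ p ∣ s) {a : K} (ha : a ∈ S) : (reducedCoeff p k s (G a)).natDegree = 0 := by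
  classical
  have := Fintype.ofFinite K
  have hp : p ≠ 0 := (Fact.out : p.Prime).ne_zero
  have natDegree_expand_le (a : K) (ha : a ∈ S) :
      (expand K e (reducedCoeff p k s (G a))).natDegree ≤ e * (p ^ k * N) := by
    rw [natDegree_expand, mul_comm]
    exact Nat.mul_le_mul_left e (natDegree_reducedCoeff_le hp k s (hGN a ha))
  have card_lt : S.card * (e * (p ^ k * N)) < Sᶜ.card := by
    rw [Finset.card_compl, ← Nat.card_eq_fintype_card]
    rw [mul_add_one] at hcard
    omega
  have natDegree_expand_eq_zero := natDegree_eq_zero_of_sum_eval_inv_sub_eq_zero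
    disjoint_compl_right card_lt natDegree_expand_le (fun x hx ↦ by
      simp only [expand_eval]
      exact sum_eval_reducedCoeff_eq_zero_of_sum_trace_evalEval_eq hkm hG
        (h x (Finset.mem_compl.1 hx)) hs) a ha
  rw [natDegree_expand] at natDegree_expand_eq_zero
  exact (mul_eq_zero.1 natDegree_expand_eq_zero).resolve_right he

theorem trace_evalEval_eq_of_sum_trace_evalEval_eq
    (hkm : 2 * k ≤ Module.finrank (ZMod p) K) (he : e ≠ 0)
    (hcard : S.card * (e * (p ^ k * N) + 1) < Nat.card K)
    (hG : ∀ a ∈ S, (G a).natDegree < p ^ k) (hGN : ∀ a ∈ S, ∀ j, ((G a).coeff j).natDegree ≤ N)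
    (h : ∀ x ∉ S, ∀ y, ∑ a ∈ S,
      Algebra.trace (ZMod p) K ((G a).evalEval ((x - a)⁻¹ ^ e) y) = c)
    {a : K} (ha : a ∈ S) {r : K} (hr : (G a).map (evalRingHom 0) = C r) (z y y' : K) :
    Algebra.trace (ZMod p) K ((G a).evalEval z y) =
      Algebra.trace (ZMod p) K ((G a).evalEval z y') := by
  have hp : p ≠ 0 := (Fact.out : p.Prime).ne_zero
  have reducedCoeff_eq_zero (s : ℕ) (hs : ¬ p ∣ s) :
      reducedCoeff p k s ((G a).map (evalRingHom z)) = 0 := by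
    have hdeg := natDegree_reducedCoeff_eq_zero_of_sum_trace_evalEval_eq hkm he hcard hG hGN h hs ha
    obtain ⟨q, hq⟩ := natDegree_eq_zero.1 hdeg
    calc reducedCoeff p k s ((G a).map (evalRingHom z))
        = reducedCoeff p k s ((G a).map (evalRingHom 0)) := by
          simp only [reducedCoeff_map, ← hq, coe_evalRingHom, eval_C]
      _ = 0 := by
          rw [hr, reducedCoeff_C hp (by rintro rfl; exact hs (dvd_zero p))]
  have hdeg : ((G a).map (evalRingHom z)).natDegree < p ^ k :=
    natDegree_map_le.trans_lt (hG a ha)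
  rw [← map_evalRingHom_eval, ← map_evalRingHom_eval,
    trace_eval_eq_of_reducedCoeff_eq_zero hdeg reducedCoeff_eq_zero,
    trace_eval_eq_of_reducedCoeff_eq_zero hdeg reducedCoeff_eq_zero]

end PoleSeparation

/-- The generalized partial-spread function `(x, y) ↦ Tr (Q (y * x⁻¹ ^ e))` on the plane over `K`;
the value at `x = 0` follows the convention `0⁻¹ = 0`. -/
noncomputable def gPSap (p : ℕ) {K : Type*} [Field K] [Algebra (ZMod p) K]
    (Q : K[X]) (e : ℕ) (P : K × K) : ZMod p :=
  Algebra.trace (ZMod p) K (Q.eval (P.2 * P.1⁻¹ ^ e))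

section Translates

variable {p : ℕ} [Fact p.Prime] {K : Type*} [Field K] [Finite K] [Algebra (ZMod p) K]

theorem sum_fiber_trace_eval_eq_of_sum_gPSap_sub_eq [DecidableEq K] {k e : ℕ} {Q : K[X]}
    (hkm : 2 * k ≤ Module.finrank (ZMod p) K) (he : e ≠ 0) (hQ : Q.natDegree < p ^ k)
    {ι : Type*} {I : Finset ι} {w : ι → K × K}
    (hcard : I.card * (e * (p ^ k * Q.natDegree) + 1) < Nat.card K) {c : ZMod p}
    (h : ∀ P, ∑ i ∈ I, gPSap p Q e (P - w i) = c) {i₀ : ι} (hi₀ : i₀ ∈ I) (z y y' : K) :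
    ∑ i ∈ I with (w i).1 = (w i₀).1, Algebra.trace (ZMod p) K (Q.eval (z * (y - (w i).2))) =
      ∑ i ∈ I with (w i).1 = (w i₀).1,
        Algebra.trace (ZMod p) K (Q.eval (z * (y' - (w i).2))) := by
  set S : Finset K := I.image fun i ↦ (w i).1
  set G : K → K[X][X] := fun a ↦ ∑ i ∈ I with (w i).1 = a, dilatedTranslate Q (w i).2 with hG
  have trace_G (a z y : K) : Algebra.trace (ZMod p) K ((G a).evalEval z y) =
      ∑ i ∈ I with (w i).1 = a, Algebra.trace (ZMod p) K (Q.eval (z * (y - (w i).2))) := by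
    simp only [hG, evalEval_finsetSum, map_sum, evalEval_dilatedTranslate]
  have sum_trace_G (x y : K) :
      ∑ a ∈ S, Algebra.trace (ZMod p) K ((G a).evalEval ((x - a)⁻¹ ^ e) y) = c := by
    rw [← h (x, y), ← Finset.sum_fiberwise_of_maps_to
      (fun i hi ↦ Finset.mem_image_of_mem (fun i ↦ (w i).1) hi)]
    refine Finset.sum_congr rfl fun a _ ↦ (trace_G a _ y).trans (Finset.sum_congr rfl ?_)
    intro i hi
    rw [gPSap, ← (Finset.mem_filter.1 hi).2, mul_comm, Prod.fst_sub, Prod.snd_sub]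
  have map_zero_G (a : K) : (G a).map (evalRingHom 0) =
      C (∑ i ∈ I with (w i).1 = a, Q.eval 0) := by
    simp [hG, Polynomial.map_sum, map_evalRingHom_dilatedTranslate]
  have card_lt : S.card * (e * (p ^ k * Q.natDegree) + 1) < Nat.card K :=
    (Nat.mul_le_mul_right _ Finset.card_image_le).trans_lt hcard
  have natDegree_G_lt (a : K) : (G a).natDegree < p ^ k :=
    natDegree_sum_lt_of_forall_lt (pow_pos (Fact.out : p.Prime).pos k) fun i _ ↦
      (natDegree_dilatedTranslate_le Q (w i).2).trans_lt hQ
  have natDegree_coeff_G_le (a : K) (j : ℕ) : ((G a).coeff j).natDegree ≤ Q.natDegree := by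
    rw [hG, finsetSum_coeff]
    exact natDegree_sum_le_of_forall_le _ _ fun i _ ↦ natDegree_coeff_dilatedTranslate_le Q _ j
  rw [← trace_G, ← trace_G]
  exact trace_evalEval_eq_of_sum_trace_evalEval_eq hkm he card_lt (fun a _ ↦ natDegree_G_lt a)
    (fun a _ ↦ natDegree_coeff_G_le a) (fun x _ ↦ sum_trace_G x) (Finset.mem_image_of_mem _ hi₀)
    (map_zero_G _) z y y'

end Translates

section SecondDerivative

variable {V : Type*} [AddCommGroup V] (f : V → ZMod 2) (u v : V)

lemma D2_comm : D2 f u v = D2 f v u := by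
  funext x
  rw [D2, D2, add_right_comm x u v, add_right_comm (f x)]

variable [Module (ZMod 2) V]

lemma D2_add_right : D2 f u (u + v) = D2 f u v := by
  funext x
  have hu : x + u + (u + v) = x + v := by
    rw [add_assoc x, ← add_assoc u, ZModModule.add_self, zero_add]
  rw [D2, D2, hu, ← add_assoc x u v, add_right_comm (f x + f (x + u))]

lemma D2_eq_sum_sub (x : V) : D2 f u v x = ∑ i, f (x - ![0, u, v, u + v] i) := by
  simp [D2, Fin.sum_univ_four, ZModModule.sub_eq_add, add_assoc]

end SecondDerivative

lemma surjective_inv_pow {K : Type*} [DivisionRing K] {e : ℕ} (he : e ≠ 0)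
    (hgcd : e.Coprime (Nat.card K - 1)) : Function.Surjective fun x : K ↦ x⁻¹ ^ e := by
  intro z
  rcases eq_or_ne z 0 with rfl | hz
  · exact ⟨0, by simp [he]⟩
  · have hcop : (Nat.card Kˣ).Coprime e := by
      rw [Nat.card_units]
      exact hgcd.symm
    obtain ⟨x, hx⟩ := (powCoprime hcop).surjective (Units.mk0 z hz)
    exact ⟨(x⁻¹ : Kˣ), by simpa using congrArg Units.val hx⟩

section CharTwo

variable {K : Type*} [Field K] [Algebra (ZMod 2) K] {e : ℕ} {Q : K[X]}

/-- The sums `z ↦ Tr (Q (b * z)) + Tr (Q (d * z)) + Tr (Q ((b + d) * z))` over the nonzero vectors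
of the planes `{0, b, d, b + d}` over `F₂` are all nonconstant. For `b = 1` and `z = x⁻¹ ^ e` these
are the functions `g_λ`. -/
def TracePlaneSumNonconstant (Q : K[X]) : Prop :=
  ∀ b d : K, b ≠ 0 → d ≠ 0 → b ≠ d → ¬ ∃ ε, ∀ z : K,
    Algebra.trace (ZMod 2) K (Q.eval (b * z)) + Algebra.trace (ZMod 2) K (Q.eval (d * z)) +
      Algebra.trace (ZMod 2) K (Q.eval ((b + d) * z)) = ε

lemma tracePlaneSumNonconstant_of_one_add
    (hg : ∀ lam : K, lam ≠ 0 → lam ≠ 1 → ¬ ∃ ε, ∀ x : K,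
      Algebra.trace (ZMod 2) K (Q.eval ((1 + lam) * x⁻¹ ^ e) + Q.eval (x⁻¹ ^ e) +
        Q.eval (lam * x⁻¹ ^ e)) = ε) : TracePlaneSumNonconstant Q := by
  rintro b d hb hd hbd ⟨ε, h⟩
  refine hg (d / b) (div_ne_zero hd hb) (fun h1 ↦ hbd ((div_eq_one_iff_eq hb).1 h1).symm)
    ⟨ε, fun x ↦ ?_⟩
  have hbx : b * (b⁻¹ * x⁻¹ ^ e) = x⁻¹ ^ e := mul_inv_cancel_left₀ hb _
  have hdx : d * (b⁻¹ * x⁻¹ ^ e) = d / b * x⁻¹ ^ e := by rw [div_eq_mul_inv, mul_assoc]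
  rw [← h (b⁻¹ * x⁻¹ ^ e), add_mul b, hbx, hdx, add_mul 1, one_mul, map_add, map_add]
  ring

theorem D2_gPSap_not_const_of_fst_eq_zero (he : e ≠ 0) (hgcd : e.Coprime (Nat.card K - 1))
    (hQ : TracePlaneSumNonconstant Q) {b d : K} (hb : b ≠ 0) (hd : d ≠ 0) (hbd : b ≠ d) :
    ¬ ∃ ε, ∀ P, D2 (gPSap 2 Q e) (0, b) (0, d) P = ε := by
  rintro ⟨ε, h⟩
  refine hQ b d hb hd hbd ⟨ε - Algebra.trace (ZMod 2) K (Q.eval 0), fun z ↦ ?_⟩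
  obtain ⟨x, rfl⟩ := surjective_inv_pow he hgcd z
  rw [← h (x, 0)]
  simp only [D2, gPSap, Prod.mk_add_mk, add_zero, zero_add, zero_mul]
  ring

variable [Finite K] {k : ℕ}

theorem D2_gPSap_not_const_of_fst_ne (hkm : 2 * k ≤ Module.finrank (ZMod 2) K) (he : e ≠ 0)
    (hQ : Q.natDegree < 2 ^ k) (hcard : 4 * (e * (2 ^ k * Q.natDegree) + 1) < Nat.card K)
    (hodd : Odd Q.natDegree) {u v : K × K} (hu : u.1 ≠ 0) (hv : v.1 ≠ 0) (huv : u.1 ≠ v.1) :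
    ¬ ∃ ε, ∀ P, D2 (gPSap 2 Q e) u v P = ε := by
  classical
  rintro ⟨ε, h⟩
  have huv_add : u.1 + v.1 ≠ 0 := by
    rwa [← ZModModule.sub_eq_add, sub_ne_zero]
  have trace_eval_eq (y : K) :
      Algebra.trace (ZMod 2) K (Q.eval y) = Algebra.trace (ZMod 2) K (Q.eval 0) := by
    have hfiber := sum_fiber_trace_eval_eq_of_sum_gPSap_sub_eq hkm he hQ (I := Finset.univ)
      (w := ![0, u, v, u + v]) hcard (fun P ↦ (D2_eq_sum_sub _ u v P).symm.trans (h P))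
      (Finset.mem_univ 0) 1 y 0
    rw [Finset.sum_filter, Finset.sum_filter, Fin.sum_univ_four, Fin.sum_univ_four] at hfiber
    simpa [hu, hv, huv_add] using hfiber
  exact hodd.not_two_dvd_nat (dvd_natDegree_of_trace_eval_eq hkm hQ trace_eval_eq)

theorem D2_gPSap_not_const_of_fst_ne_zero (hkm : 2 * k ≤ Module.finrank (ZMod 2) K) (he : e ≠ 0)
    (hQ : Q.natDegree < 2 ^ k) (hcard : 4 * (e * (2 ^ k * Q.natDegree) + 1) < Nat.card K)
    (hsum : TracePlaneSumNonconstant Q) {u : K × K} (hu : u.1 ≠ 0) {d : K} (hd : d ≠ 0) :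
    ¬ ∃ ε, ∀ P, D2 (gPSap 2 Q e) u (0, d) P = ε := by
  classical
  rintro ⟨ε, h⟩
  have := Fintype.ofFinite K
  have card_pair_lt : Finset.card {0, d} < (Finset.univ : Finset K).card := by
    rw [Finset.card_univ, ← Nat.card_eq_fintype_card]
    exact Finset.card_le_two.trans_lt (by omega)
  obtain ⟨b, -, hb⟩ := Finset.exists_mem_notMem_of_card_lt_card card_pair_lt
  rw [Finset.mem_insert, Finset.mem_singleton, not_or] at hb
  refine hsum b d hb.1 hd hb.2 ⟨Algebra.trace (ZMod 2) K (Q.eval 0), fun z ↦ ?_⟩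
  have hfiber := sum_fiber_trace_eval_eq_of_sum_gPSap_sub_eq hkm he hQ (I := Finset.univ)
    (w := ![0, u, (0, d), u + (0, d)]) hcard (fun P ↦ (D2_eq_sum_sub _ u _ P).symm.trans (h P))
    (Finset.mem_univ 0) z b 0
  rw [Finset.sum_filter, Finset.sum_filter, Fin.sum_univ_four, Fin.sum_univ_four] at hfiber
  have trace_add_eq : Algebra.trace (ZMod 2) K (Q.eval (b * z)) +
      Algebra.trace (ZMod 2) K (Q.eval ((b + d) * z)) =
      Algebra.trace (ZMod 2) K (Q.eval 0) + Algebra.trace (ZMod 2) K (Q.eval (d * z)) := by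
    simpa [hu, mul_comm z, ZModModule.sub_eq_add, ZModModule.neg_eq_self] using hfiber
  rw [add_right_comm, trace_add_eq, add_assoc, ZModModule.add_self, add_zero]

lemma exists_two_mul_le_finrank_and_lt_two_pow {t : ℕ} (he : e ≠ 0) (ht : t ≠ 0)
    (hcard : 8 * e * t ^ 2 + 4 < Nat.card K) :
    ∃ k, 2 * k ≤ Module.finrank (ZMod 2) K ∧ t < 2 ^ k ∧
      4 * (e * (2 ^ k * t) + 1) < Nat.card K := by
  have h2k : 2 ^ (Nat.log 2 t + 1) ≤ 2 * t := by
    rw [pow_succ']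
    exact Nat.mul_le_mul_left 2 (Nat.pow_log_le_self 2 ht)
  refine ⟨Nat.log 2 t + 1, ?_, Nat.lt_pow_succ_log_self one_lt_two t, ?_⟩
  · have hlt : 2 ^ (2 * (Nat.log 2 t + 1)) < 2 ^ Module.finrank (ZMod 2) K :=
      calc 2 ^ (2 * (Nat.log 2 t + 1)) = (2 ^ (Nat.log 2 t + 1)) ^ 2 := by rw [mul_comm, pow_mul]
        _ ≤ (2 * t) ^ 2 := Nat.pow_le_pow_left h2k 2
        _ ≤ 8 * e * t ^ 2 + 4 := by nlinarith [Nat.one_le_iff_ne_zero.2 he, sq_nonneg t]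
        _ < Nat.card K := hcard
        _ = 2 ^ Module.finrank (ZMod 2) K := by
          rw [Module.natCard_eq_pow_finrank (K := ZMod 2), Nat.card_zmod]
    exact ((Nat.pow_lt_pow_iff_right one_lt_two).1 hlt).le
  · calc 4 * (e * (2 ^ (Nat.log 2 t + 1) * t) + 1) ≤ 4 * (e * (2 * t * t) + 1) := by gcongr
      _ = 8 * e * t ^ 2 + 4 := by ring
      _ < Nat.card K := hcard

theorem gPSap_no_decomposition_general (he : e ≠ 0) (hgcd : e.Coprime (Nat.card K - 1))
    (hodd : Odd Q.natDegree) (hcard : 8 * e * Q.natDegree ^ 2 + 4 < Nat.card K)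
    (hg : ∀ lam : K, lam ≠ 0 → lam ≠ 1 → ¬ ∃ ε, ∀ x : K,
      Algebra.trace (ZMod 2) K (Q.eval ((1 + lam) * x⁻¹ ^ e) + Q.eval (x⁻¹ ^ e) +
        Q.eval (lam * x⁻¹ ^ e)) = ε)
    {u v : K × K} (huv : LinearIndependent (ZMod 2) ![u, v]) :
    ¬ ∃ ε, ∀ P, D2 (gPSap 2 Q e) u v P = ε := by
  have hsum := tracePlaneSumNonconstant_of_one_add hg
  obtain ⟨k, hkm, hQk, hcardk⟩ :=
    exists_two_mul_le_finrank_and_lt_two_pow he hodd.pos.ne' hcard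
  have hu : u ≠ 0 := huv.ne_zero 0
  have hv : v ≠ 0 := huv.ne_zero 1
  have huv_ne : u ≠ v := huv.injective.ne (a₁ := 0) (a₂ := 1) (by decide)
  obtain ⟨a, b⟩ := u
  obtain ⟨c, d⟩ := v
  rcases eq_or_ne a 0 with rfl | ha <;> rcases eq_or_ne c 0 with rfl | hc
  · exact D2_gPSap_not_const_of_fst_eq_zero he hgcd hsum (by simpa using hu) (by simpa using hv)
      (by simpa using huv_ne)
  · rw [D2_comm]
    exact D2_gPSap_not_const_of_fst_ne_zero hkm he hQk hcardk hsum hc (by simpa using hu)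
  · exact D2_gPSap_not_const_of_fst_ne_zero hkm he hQk hcardk hsum ha (by simpa using hv)
  · rcases eq_or_ne a c with rfl | hac
    · rw [← D2_add_right, Prod.mk_add_mk, ZModModule.add_self]
      refine D2_gPSap_not_const_of_fst_ne_zero hkm he hQk hcardk hsum ha ?_
      rw [← ZModModule.sub_eq_add, sub_ne_zero]
      simpa using huv_ne
    · exact D2_gPSap_not_const_of_fst_ne hkm he hQk hcardk hodd ha hc hac

end CharTwo

lemma sq_lt_two_pow_of_mul_le_rpow_div_four {m e t : ℕ} (he : e ≠ 0) (ht : t ≠ 0)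
    (h : (4 * e * t : ℝ) ≤ 2 ^ ((m : ℝ) / 4) - 1) : 8 * e * t ^ 2 + 4 < 2 ^ m := by
  have pow_four_le : (4 * e * t + 1) ^ 4 ≤ 2 ^ m := by
    have hreal : (4 * e * t + 1 : ℝ) ^ 4 ≤ 2 ^ m :=
      calc (4 * e * t + 1 : ℝ) ^ 4 ≤ (2 ^ ((m : ℝ) / 4)) ^ 4 := by gcongr; linarith
        _ = 2 ^ m := by
          rw [← Real.rpow_mul_natCast two_pos.le, ← Real.rpow_natCast]
          congr 1
          push_cast
          ring
    exact_mod_cast hreal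
  have het : 1 ≤ e * t := Nat.one_le_iff_ne_zero.2 (mul_ne_zero he ht)
  have ht_le : t ≤ e * t := Nat.le_mul_of_pos_left t (Nat.pos_of_ne_zero he)
  calc 8 * e * t ^ 2 + 4 = 8 * (e * t) * t + 4 := by ring
    _ ≤ 8 * (e * t) * (e * t) + 4 := by gcongr
    _ < (4 * (e * t) + 1) ^ 2 := by nlinarith
    _ ≤ (4 * (e * t) + 1) ^ 4 := Nat.pow_le_pow_right (by omega) (by omega)
    _ ≤ 2 ^ m := by rwa [← mul_assoc]

/-- Theorem 4.9 (second-order derivative form): for a permutation polynomial `Q` of odd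
degree `t` with `Q(0) = 0` and `4et ≤ 2^{m/4} - 1`, if the auxiliary functions
`g_λ(x) = Tr(Q((1+λ)x^{-e}) + Q(x^{-e}) + Q(λx^{-e}))` are nonconstant for all
`λ ∉ F₂`, then no second-order derivative of `f̃(x,y) = Tr(Q(y x^{-e}))` along linearly
independent directions is constant. -/
theorem gPSap_no_decomposition
    (m : ℕ) (hm : 4 ≤ m) (e : ℕ) (he : 0 < e) (hgcd : Nat.gcd e (2 ^ m - 1) = 1)
    (Q : Polynomial (GaloisField 2 m)) (hQ0 : Q.eval 0 = 0)
    (t : ℕ) (ht : Q.natDegree = t) (htodd : Odd t)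
    (hQperm : Function.Bijective fun x => Q.eval x)
    (hbound : (4 * e * t : ℝ) ≤ 2 ^ ((m : ℝ) / 4) - 1)
    (hg : ∀ lam : GaloisField 2 m, lam ≠ 0 → lam ≠ 1 →
      ¬ ∃ ε : ZMod 2, ∀ x : GaloisField 2 m,
        Tr m (Q.eval ((1 + lam) * (x⁻¹) ^ e) + Q.eval ((x⁻¹) ^ e) +
          Q.eval (lam * (x⁻¹) ^ e)) = ε)
    (f : GaloisField 2 m × GaloisField 2 m → ZMod 2)
    (hf : ∀ x y, f (x, y) = Tr m (Q.eval (y * (x⁻¹) ^ e))) :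
    ∀ u v : GaloisField 2 m × GaloisField 2 m,
      LinearIndependent (ZMod 2) ![u, v] →
      ¬ ∃ ε : ZMod 2, ∀ p : GaloisField 2 m × GaloisField 2 m, D2 f u v p = ε := by
  intro u v huv
  subst ht
  obtain rfl : f = gPSap 2 Q e := funext fun P ↦ hf P.1 P.2
  have hcard : Nat.card (GaloisField 2 m) = 2 ^ m := GaloisField.card 2 m (by omega)
  have hlt : 8 * e * Q.natDegree ^ 2 + 4 < Nat.card (GaloisField 2 m) :=
    hcard ▸ sq_lt_two_pow_of_mul_le_rpow_div_four he.ne' htodd.pos.ne' hbound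
  exact gPSap_no_decomposition_general he.ne' (hcard ▸ hgcd) htodd hlt hg huv
end
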